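/- arXiv:2209.08870 — 7 statements merged into one kernel-verified Lean document; each statement's English description precedes it below -/
import Mathlib

section
/- Let A be a unital C*-algebra, q ∈ (0,1) a real number, and a ∈ A an element satisfying a*a = q²·a a* + (1−q²)·1. Then ‖a‖ = 1. -/
/-!
The relation reads `1 - a⋆a = q² (1 - aa⋆)`. Assume `q² < 1`; otherwise exchange `a` and `a⋆`.
The triangle inequality gives `‖a‖ ≤ 1`. For the reverse inequality let `S` be the spectrum of
`1 - aa⋆`. Since `a⋆a` and `aa⋆` have the same nonzero spectrum, `S` and `q² S` agree away from the
point `1`, so one of them contains the other. As `S` is nonempty and compact, contracting by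
`q²` forces `0 ∈ S`. So `1 - aa⋆` is not invertible and `1 ≤ ‖aa⋆‖ = ‖a‖²`.
-/

section Contraction

open Filter Topology
open scoped Pointwise

variable {𝕜 E : Type*} [NormedField 𝕜] {c : 𝕜}

theorem zero_mem_of_isClosed_of_smul_subset [AddCommGroup E] [TopologicalSpace E] [Module 𝕜 E]
    [ContinuousSMul 𝕜 E] {s : Set E} (hc : ‖c‖ < 1) (hs : IsClosed s) (hne : s.Nonempty)
    (hsub : c • s ⊆ s) : (0 : E) ∈ s := by
  obtain ⟨x, hx⟩ := hne
  have orbit_mem (n : ℕ) : c ^ n • x ∈ s := by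
    induction n with
    | zero => simpa using hx
    | succ n ih => simpa only [pow_succ', mul_smul] using hsub (Set.smul_mem_smul_set ih)
  have orbit_tendsto : Tendsto (fun n : ℕ => c ^ n • x) atTop (𝓝 0) := by
    simpa using (tendsto_pow_atTop_nhds_zero_of_norm_lt_one hc).smul_const x
  exact hs.mem_of_tendsto orbit_tendsto (Eventually.of_forall orbit_mem)

variable [NormedAddCommGroup E] [NormedSpace 𝕜 E] {s : Set E}

theorem subset_singleton_zero_of_isBounded_of_subset_smul (hc : ‖c‖ < 1)
    (hs : Bornology.IsBounded s) (hsub : s ⊆ c • s) : s ⊆ {0} := by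
  obtain ⟨M, hM⟩ := hs.exists_norm_le
  have subset_pow_smul (n : ℕ) : s ⊆ c ^ n • s := by
    induction n with
    | zero => simp
    | succ n ih => simpa only [pow_succ', mul_smul] using hsub.trans (Set.smul_set_mono ih)
  intro x hx
  have norm_le (n : ℕ) : ‖x‖ ≤ ‖c‖ ^ n * M := by
    obtain ⟨y, hy, rfl⟩ := subset_pow_smul n hx
    simpa only [norm_smul, norm_pow] using
      mul_le_mul_of_nonneg_left (hM y hy) (pow_nonneg (norm_nonneg c) n)
  have bound_tendsto : Tendsto (fun n : ℕ => ‖c‖ ^ n * M) atTop (𝓝 0) := by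
    simpa using (tendsto_pow_atTop_nhds_zero_of_lt_one (norm_nonneg c) hc).mul_const M
  exact norm_le_zero_iff.1 (ge_of_tendsto' bound_tendsto norm_le)

theorem zero_mem_of_smul_sdiff_singleton_eq (hc : ‖c‖ < 1) (hclosed : IsClosed s)
    (hbounded : Bornology.IsBounded s) (hne : s.Nonempty) {p : E}
    (h : (c • s) \ {p} = s \ {p}) : (0 : E) ∈ s := by
  by_cases hp : p ∈ s
  · have smul_subset : c • s ⊆ s := by
      simpa [Set.insert_eq_of_mem hp] using Set.sdiff_subset_iff.1 (h.subset.trans Set.sdiff_subset)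
    exact zero_mem_of_isClosed_of_smul_subset hc hclosed hne smul_subset
  · have subset_smul : s ⊆ c • s :=
      (Set.sdiff_singleton_eq_self hp).symm.trans h.symm |>.subset.trans Set.sdiff_subset
    obtain ⟨x, hx⟩ := hne
    exact subset_singleton_zero_of_isBounded_of_subset_smul hc hbounded subset_smul hx ▸ hx

end Contraction

section Spectrum

theorem mem_spectrum_one_sub_iff {R A : Type*} [CommRing R] [Ring A] [Algebra R A] {r : R}
    {a : A} : r ∈ spectrum R (1 - a) ↔ 1 - r ∈ spectrum R a := by
  have sub_eq_neg : algebraMap R A r - (1 - a) = -(algebraMap R A (1 - r) - a) := by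
    rw [map_sub, map_one]
    abel
  rw [spectrum.mem_iff, spectrum.mem_iff, sub_eq_neg, IsUnit.neg_iff]

theorem spectrum_one_sub_mul_sdiff_one_comm {𝕜 A : Type*} [Field 𝕜] [Ring A] [Algebra 𝕜 A]
    (x y : A) : spectrum 𝕜 (1 - x * y) \ {1} = spectrum 𝕜 (1 - y * x) \ {1} := by
  ext z
  have nonzero_comm := Set.ext_iff.1 (spectrum.nonzero_mul_comm (𝕜 := 𝕜) x y) (1 - z)
  simpa only [Set.mem_sdiff, Set.mem_singleton_iff, mem_spectrum_one_sub_iff, sub_eq_zero,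
    eq_comm (a := (1 : 𝕜))] using nonzero_comm

theorem not_isUnit_one_sub_mul_of_one_sub_mul_eq_smul {A : Type*} [NormedRing A]
    [NormedAlgebra ℂ A] [CompleteSpace A] [Nontrivial A] {c : ℂ} (hc : ‖c‖ < 1) {x y : A}
    (h : 1 - x * y = c • (1 - y * x)) : ¬IsUnit (1 - y * x) := by
  have hne : (spectrum ℂ (1 - y * x)).Nonempty := spectrum.nonempty _
  refine spectrum.not_isUnit_of_zero_mem ℂ <| zero_mem_of_smul_sdiff_singleton_eq hc
    (spectrum.isClosed _) (spectrum.isBounded _) hne (p := 1) ?_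
  rw [← spectrum.smul_eq_smul c _ hne, ← h, spectrum_one_sub_mul_sdiff_one_comm]

end Spectrum

section CStarRing

variable {A : Type*} [NormedRing A] [StarRing A] [CStarRing A] [NormedAlgebra ℂ A] [Nontrivial A]
  {r : ℝ} {a : A}

theorem norm_le_one_of_star_mul_self_eq (hr₀ : 0 ≤ r) (hr₁ : r < 1)
    (h : star a * a = (r : ℂ) • (a * star a) + (1 - (r : ℂ)) • (1 : A)) : ‖a‖ ≤ 1 := by
  have norm_one_sub : ‖1 - (r : ℂ)‖ = 1 - r := by
    rw [← Complex.ofReal_one, ← Complex.ofReal_sub, Complex.norm_of_nonneg (by linarith)]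
  have sq_le : ‖a‖ ^ 2 ≤ r * ‖a‖ ^ 2 + (1 - r) := calc
    ‖a‖ ^ 2 = ‖(r : ℂ) • (a * star a) + (1 - (r : ℂ)) • (1 : A)‖ := by
      rw [← h, CStarRing.norm_star_mul_self, sq]
    _ ≤ ‖(r : ℂ) • (a * star a)‖ + ‖(1 - (r : ℂ)) • (1 : A)‖ := norm_add_le _ _
    _ = r * ‖a‖ ^ 2 + (1 - r) := by
      rw [norm_smul, norm_smul, Complex.norm_of_nonneg hr₀, norm_one_sub,
        CStarRing.norm_self_mul_star, CStarRing.norm_one, mul_one, sq]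
  exact (sq_le_one_iff₀ (norm_nonneg a)).1 (by nlinarith)

variable [CompleteSpace A]

theorem one_le_norm_of_star_mul_self_eq {c : ℂ} (hc : ‖c‖ < 1)
    (h : star a * a = c • (a * star a) + (1 - c) • (1 : A)) : 1 ≤ ‖a‖ := by
  have not_isUnit : ¬IsUnit (1 - a * star a) :=
    not_isUnit_one_sub_mul_of_one_sub_mul_eq_smul hc (by rw [h]; module)
  have one_le_norm_mul : 1 ≤ ‖a * star a‖ := by
    contrapose! not_isUnit
    exact isUnit_one_sub_of_norm_lt_one not_isUnit
  rwa [CStarRing.norm_self_mul_star, ← sq, one_le_sq_iff₀ (norm_nonneg a)] at one_le_norm_mul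

theorem norm_eq_one_of_star_mul_self_eq (hr₀ : 0 ≤ r) (hr₁ : r < 1)
    (h : star a * a = (r : ℂ) • (a * star a) + (1 - (r : ℂ)) • (1 : A)) : ‖a‖ = 1 :=
  (norm_le_one_of_star_mul_self_eq hr₀ hr₁ h).antisymm
    (one_le_norm_of_star_mul_self_eq (by rwa [Complex.norm_of_nonneg hr₀]) h)

theorem norm_eq_one_of_qSphere_relation_general {q : ℝ} (hq : q ^ 2 ≠ 1)
    (h : star a * a = ((q : ℂ) ^ 2) • (a * star a) + (1 - (q : ℂ) ^ 2) • (1 : A)) :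
    ‖a‖ = 1 := by
  rcases hq.lt_or_gt with hlt | hgt
  · exact norm_eq_one_of_star_mul_self_eq (sq_nonneg q) hlt (by simpa using h)
  · have hq₀ : (q : ℂ) ≠ 0 := by
      exact_mod_cast sq_pos_iff.1 (zero_lt_one.trans hgt)
    have swapped : star (star a) * star a = (((q ^ 2)⁻¹ : ℝ) : ℂ) • (star a * star (star a)) +
        (1 - (((q ^ 2)⁻¹ : ℝ) : ℂ)) • (1 : A) := by
      rw [star_star, h]
      push_cast
      match_scalars <;> field_simp
      ring
    rw [← norm_star]
    exact norm_eq_one_of_star_mul_self_eq (inv_nonneg.2 (sq_nonneg q)) (inv_lt_one_of_one_lt₀ hgt)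
      swapped

end CStarRing

/-- In a (nonzero) unital C*-algebra, if `a* a = q² a a* + (1-q²) 1` with `q ∈ (0,1)`,
then `‖a‖ = 1`. -/
theorem norm_eq_one_of_qSphere_relation {A : Type*} [NormedRing A] [StarRing A] [CStarRing A]
    [NormedAlgebra ℂ A] [CompleteSpace A] [Nontrivial A]
    (q : ℝ) (hq : q ∈ Set.Ioo (0 : ℝ) 1) (a : A)
    (h : star a * a = ((q : ℂ) ^ 2) • (a * star a) + (1 - (q : ℂ) ^ 2) • (1 : A)) :
    ‖a‖ = 1 := by
  have hq_sq : q ^ 2 < 1 := pow_lt_one₀ hq.1.le hq.2 two_ne_zero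
  exact norm_eq_one_of_qSphere_relation_general hq_sq.ne h
end

section
/- Let A be a unital C*-algebra, q ∈ (0,1), and z₁, z₂, z₃, z₄ ∈ A elements satisfying the Vaksman–Soibelman S_q^7 relations. Then the spectrum of z₂*z₂ is contained in {(1−q^{2k})q^{2(n+m)} : n, m ≥ 0, k ≥ 1} ∪ {q^{2(m+n)} : n, m ≥ 0} ∪ {0}, and the spectrum of z₂z₂* is contained in {(1−q^{2k})q^{2(n+m)} : n, m, k ≥ 0} ∪ {q^{2(m+n)} : n, m ≥ 0}. -/
/-- The Vaksman–Soibelman `S_q^7` relations for a 4-tuple of elements of a unital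
complex *-algebra. -/
def VSRel {A : Type*} [Ring A] [StarRing A] [Algebra ℂ A] (q : ℝ) (z : Fin 4 → A) : Prop :=
  (∀ i j : Fin 4, i < j → z i * z j = (q : ℂ) • (z j * z i)) ∧
  (∀ i j : Fin 4, i ≠ j → star (z j) * z i = (q : ℂ) • (z i * star (z j))) ∧
  (∀ k : Fin 4, star (z k) * z k
      = z k * star (z k) + (1 - (q : ℂ) ^ 2) • ∑ j ∈ Finset.Iio k, z j * star (z j)) ∧
  ∑ k : Fin 4, z k * star (z k) = 1

/-!
Write `r = q ^ 2` and `Pₘ = ∑_{j < m} zⱼ zⱼ*`, with indices starting at `0`. The relations say that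
`zᵢ zᵢ* = Pᵢ₊₁ - Pᵢ`, that `zᵢ* zᵢ = Pᵢ₊₁ - r Pᵢ`, and that `Pᵢ₊₁` commutes with `zᵢ`.
Let `v` be invertible and commute with `zᵢ`. If `u = r ^ k Pᵢ₊₁ - v` is invertible for all `k`, then
`u - (r ^ k zᵢ) zᵢ* = r ^ k Pᵢ - v` is invertible exactly when
`u - zᵢ* (r ^ k zᵢ) = r ^ (k + 1) Pᵢ - v` is. Since `r ^ k Pᵢ - v → -v` and the invertible
elements form an open set, these are invertible for large `k`, and descending in `k` so is `Pᵢ - v`.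
Taking `v = μ` bounds the spectrum of `Pᵢ` by that of `Pᵢ₊₁`, down from the full sum `P_N = 1`;
taking `v = Pᵢ₊₁ - μ` bounds the spectrum of `zᵢ zᵢ*`, which agrees with that of `zᵢ* zᵢ` up
to `0`.
-/

theorem isUnit_one_sub_mul_comm {R : Type*} [Ring R] {x y : R} :
    IsUnit (1 - x * y) ↔ IsUnit (1 - y * x) := by
  simpa [spectrum.mem_iff, not_iff_not] using
    spectrum.unit_mem_mul_comm (R := ℤ) (a := x) (b := y) (r := 1)

theorem isUnit_sub_mul_comm_of_commute {R : Type*} [Ring R] {u x y : R} (hu : IsUnit u)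
    (hux : Commute u x) : IsUnit (u - x * y) ↔ IsUnit (u - y * x) := by
  obtain ⟨u, rfl⟩ := hu
  have left_factor : ↑u - x * y = u * (1 - ↑u⁻¹ * x * y) := by simp [mul_sub, mul_assoc]
  have right_factor : ↑u - y * x = (1 - y * (↑u⁻¹ * x)) * u := by
    rw [hux.units_inv_left.eq]
    simp [sub_mul, mul_assoc]
  rw [left_factor, right_factor, Units.isUnit_units_mul, Units.isUnit_mul_units,
    isUnit_one_sub_mul_comm]

theorem exists_eq_mul_of_mem_spectrum_smul {𝕜 A : Type*} [Field 𝕜] [Ring A] [Algebra 𝕜 A]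
    {a : A} {c μ : 𝕜} (hμ : μ ≠ 0) (h : μ ∈ spectrum 𝕜 (c • a)) :
    ∃ s ∈ spectrum 𝕜 a, μ = c * s := by
  obtain rfl | hc := eq_or_ne c 0
  · rw [zero_smul, spectrum.mem_iff, sub_zero] at h
    exact absurd (hμ.isUnit.map _) h
  · rw [← Units.smul_mk0 hc, spectrum.unit_smul_eq_smul] at h
    obtain ⟨s, hs, rfl⟩ := h
    exact ⟨s, hs, rfl⟩

/-- `P - Q` and its deformation `P - r • Q` are the products of `x` and `y` in the two orders.
This is the part of the quantum sphere relations that involves a single generator: there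
`x = zᵢ`, `y = zᵢ*` and `P`, `Q` are consecutive partial sums of `∑ zⱼ zⱼ*`. -/
structure IsTwistedFactorization {𝕜 A : Type*} [CommRing 𝕜] [Ring A] [Algebra 𝕜 A]
    (r : 𝕜) (x y P Q : A) : Prop where
  mul_eq : x * y = P - Q
  mul_swap_eq : y * x = P - r • Q
  commute : Commute P x

namespace IsTwistedFactorization

section Algebra

variable {𝕜 A : Type*} [CommRing 𝕜] [Ring A] [Algebra 𝕜 A] {r : 𝕜} {x y P Q v : A}

theorem isUnit_pow_smul_sub_iff_succ (h : IsTwistedFactorization r x y P Q) (hvx : Commute v x)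
    {k : ℕ} (hk : IsUnit (r ^ k • P - v)) :
    IsUnit (r ^ k • Q - v) ↔ IsUnit (r ^ (k + 1) • Q - v) := by
  have hcomm : Commute (r ^ k • P - v) (r ^ k • x) :=
    ((h.commute.smul_left _).sub_left hvx).smul_right _
  have hxy : r ^ k • P - v - r ^ k • x * y = r ^ k • Q - v := by
    rw [smul_mul_assoc, h.mul_eq, smul_sub]
    abel
  have hyx : r ^ k • P - v - y * r ^ k • x = r ^ (k + 1) • Q - v := by
    rw [mul_smul_comm, h.mul_swap_eq, smul_sub, smul_smul, ← pow_succ]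
    abel
  rw [← hxy, ← hyx, isUnit_sub_mul_comm_of_commute hk hcomm]

end Algebra

variable {𝕜 A : Type*} [NormedField 𝕜] [NormedRing A] [NormedAlgebra 𝕜 A] [CompleteSpace A]
  {r μ : 𝕜} {x y P Q v : A}

open Filter Topology in
theorem isUnit_sub (h : IsTwistedFactorization r x y P Q) (hr : ‖r‖ < 1) (hv : IsUnit v)
    (hvx : Commute v x) (hP : ∀ k : ℕ, IsUnit (r ^ k • P - v)) : IsUnit (Q - v) := by
  have hlim : Tendsto (fun k : ℕ ↦ r ^ k • Q - v) atTop (𝓝 (-v)) := by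
    simpa using ((tendsto_pow_atTop_nhds_zero_of_norm_lt_one hr).smul_const Q).sub_const v
  obtain ⟨n, hn⟩ := (hlim.eventually (Units.isOpen.mem_nhds hv.neg)).exists
  have hzero : IsUnit (r ^ 0 • Q - v) :=
    Nat.decreasingInduction' (P := fun k ↦ IsUnit (r ^ k • Q - v))
      (fun k _ _ ↦ (h.isUnit_pow_smul_sub_iff_succ hvx (hP k)).mpr) n.zero_le hn
  rwa [pow_zero, one_smul] at hzero

theorem exists_eq_pow_mul_of_mem_spectrum (h : IsTwistedFactorization r x y P Q) (hr : ‖r‖ < 1)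
    (hμ : μ ≠ 0) (hQ : μ ∈ spectrum 𝕜 Q) :
    ∃ k : ℕ, ∃ s ∈ spectrum 𝕜 P, μ = r ^ k * s := by
  by_contra! hP
  have hunit (k : ℕ) : IsUnit (r ^ k • P - algebraMap 𝕜 A μ) := by
    rw [IsUnit.sub_iff, ← spectrum.notMem_iff]
    intro hk
    obtain ⟨s, hs, hμs⟩ := exists_eq_mul_of_mem_spectrum_smul hμ hk
    exact hP k s hs hμs
  have hQ' : IsUnit (Q - algebraMap 𝕜 A μ) :=
    h.isUnit_sub hr (hμ.isUnit.map _) (Algebra.commutes μ x) hunit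
  exact hQ (IsUnit.sub_iff.mp hQ')

theorem mem_spectrum_or_exists_eq_one_sub_pow_mul (h : IsTwistedFactorization r x y P Q)
    (hr : ‖r‖ < 1) (hμ : μ ≠ 0) (hxy : μ ∈ spectrum 𝕜 (x * y)) :
    μ ∈ spectrum 𝕜 P ∨ ∃ k : ℕ, ∃ s ∈ spectrum 𝕜 P, μ = (1 - r ^ k) * s := by
  by_contra! ⟨hμP, hP⟩
  have hunit (k : ℕ) : IsUnit (r ^ k • P - (P - algebraMap 𝕜 A μ)) := by
    have hk : μ ∉ spectrum 𝕜 ((1 - r ^ k) • P) := by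
      intro hk
      obtain ⟨s, hs, hμs⟩ := exists_eq_mul_of_mem_spectrum_smul hμ hk
      exact hP k s hs hμs
    rw [spectrum.notMem_iff, sub_smul, one_smul] at hk
    rwa [sub_sub_eq_add_sub, add_comm, ← sub_sub_eq_add_sub]
  have hxy' : IsUnit (Q - (P - algebraMap 𝕜 A μ)) :=
    h.isUnit_sub hr (IsUnit.sub_iff.mp (spectrum.notMem_iff.mp hμP))
      (h.commute.sub_left (Algebra.commutes μ x)) hunit
  rw [sub_sub_eq_add_sub, add_comm, ← sub_sub_eq_add_sub, ← h.mul_eq] at hxy'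
  exact hxy hxy'

end IsTwistedFactorization

/-- The Vaksman–Soibelman relations of the quantum sphere `S_q^{2N-1}`, for any number `N` of
generators and any deformation parameter `q` among the scalars; `VSRel` is the case `N = 4` of
a real `q` in `ℂ`. -/
structure QSphereRel {𝕜 A : Type*} [CommRing 𝕜] [Ring A] [StarRing A] [Algebra 𝕜 A] {N : ℕ}
    (q : 𝕜) (z : Fin N → A) : Prop where
  mul_eq_smul : ∀ i j, i < j → z i * z j = q • (z j * z i)
  star_mul_eq_smul : ∀ i j, i ≠ j → star (z j) * z i = q • (z i * star (z j))
  star_mul_self : ∀ k, star (z k) * z k =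
    z k * star (z k) + (1 - q ^ 2) • ∑ j ∈ Finset.Iio k, z j * star (z j)
  sum_mul_star : ∑ k, z k * star (z k) = 1

/-- The sum of `zⱼ zⱼ*` over the first `m` generators. It is indexed by `m : ℕ` rather than by
`Fin N`, so that `m = N` gives the full sum. -/
def mulStarPartialSum {A : Type*} [Ring A] [StarRing A] {N : ℕ} (z : Fin N → A) (m : ℕ) : A :=
  ∑ j : Fin N with j.val < m, z j * star (z j)

section MulStarPartialSum

variable {A : Type*} [Ring A] [StarRing A] {N : ℕ} (z : Fin N → A)

theorem mulStarPartialSum_eq_sum_Iio (i : Fin N) :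
    mulStarPartialSum z i = ∑ j ∈ Finset.Iio i, z j * star (z j) :=
  Finset.sum_congr (by ext; simp) fun _ _ ↦ rfl

theorem mulStarPartialSum_succ (i : Fin N) :
    mulStarPartialSum z (i + 1) = z i * star (z i) + mulStarPartialSum z i := by
  have hfilter : ({j : Fin N | j.val < i + 1} : Finset (Fin N)) = insert i (Finset.Iio i) := by
    ext j
    simp [le_iff_eq_or_lt, Fin.val_inj]
  rw [mulStarPartialSum, hfilter, Finset.sum_insert (by simp), mulStarPartialSum_eq_sum_Iio]

theorem mulStarPartialSum_eq_sum_univ : mulStarPartialSum z N = ∑ j, z j * star (z j) := by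
  simp [mulStarPartialSum]

end MulStarPartialSum

namespace QSphereRel

section Algebra

variable {𝕜 A : Type*} [CommRing 𝕜] [Ring A] [StarRing A] [Algebra 𝕜 A] {N : ℕ} {q : 𝕜}
  {z : Fin N → A}

theorem mul_star_mul_eq_smul (h : QSphereRel q z) {i j : Fin N} (hij : i < j) :
    z i * star (z i) * z j = q ^ 2 • (z j * (z i * star (z i))) := by
  rw [mul_assoc, h.star_mul_eq_smul j i hij.ne', mul_smul_comm, ← mul_assoc, h.mul_eq_smul i j hij,
    smul_mul_assoc, smul_smul, mul_assoc, sq]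

theorem mulStarPartialSum_mul_eq_smul (h : QSphereRel q z) (i : Fin N) :
    mulStarPartialSum z i * z i = q ^ 2 • (z i * mulStarPartialSum z i) := by
  rw [mulStarPartialSum_eq_sum_Iio, Finset.sum_mul, Finset.mul_sum, Finset.smul_sum]
  exact Finset.sum_congr rfl fun j hj ↦ h.mul_star_mul_eq_smul (Finset.mem_Iio.mp hj)

theorem star_mul_self_eq_mulStarPartialSum_sub (h : QSphereRel q z) (i : Fin N) :
    star (z i) * z i = mulStarPartialSum z (i + 1) - q ^ 2 • mulStarPartialSum z i := by
  rw [h.star_mul_self, ← mulStarPartialSum_eq_sum_Iio, mulStarPartialSum_succ, sub_smul,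
    one_smul, add_sub_assoc]

theorem commute_mulStarPartialSum_succ (h : QSphereRel q z) (i : Fin N) :
    Commute (mulStarPartialSum z (i + 1)) (z i) :=
  calc mulStarPartialSum z (i + 1) * z i
    _ = z i * (star (z i) * z i) + mulStarPartialSum z i * z i := by
      rw [mulStarPartialSum_succ, add_mul, mul_assoc]
    _ = z i * (mulStarPartialSum z (i + 1) - q ^ 2 • mulStarPartialSum z i) +
          q ^ 2 • (z i * mulStarPartialSum z i) := by
      rw [h.star_mul_self_eq_mulStarPartialSum_sub, h.mulStarPartialSum_mul_eq_smul]
    _ = z i * mulStarPartialSum z (i + 1) := by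
      rw [mul_sub, mul_smul_comm, sub_add_cancel]

theorem isTwistedFactorization (h : QSphereRel q z) (i : Fin N) :
    IsTwistedFactorization (q ^ 2) (z i) (star (z i))
      (mulStarPartialSum z (i + 1)) (mulStarPartialSum z i) where
  mul_eq := by rw [mulStarPartialSum_succ, add_sub_cancel_right]
  mul_swap_eq := h.star_mul_self_eq_mulStarPartialSum_sub i
  commute := h.commute_mulStarPartialSum_succ i

end Algebra

variable {𝕜 A : Type*} [NormedField 𝕜] [NormedRing A] [StarRing A] [NormedAlgebra 𝕜 A]
  [CompleteSpace A] {N : ℕ} {q μ : 𝕜} {z : Fin N → A}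

theorem exists_eq_pow_of_mem_spectrum_mulStarPartialSum (h : QSphereRel q z) (hq : ‖q‖ < 1) {m : ℕ}
    (hm : m ≤ N) (hμ : μ ≠ 0) (hμm : μ ∈ spectrum 𝕜 (mulStarPartialSum z m)) :
    ∃ n : ℕ, μ = (q ^ 2) ^ n := by
  induction hm using Nat.decreasingInduction generalizing μ with
  | self =>
    have : Nontrivial A := not_subsingleton_iff_nontrivial.mp fun _ ↦ by
      simp [spectrum.of_subsingleton] at hμm
    rw [mulStarPartialSum_eq_sum_univ, h.sum_mul_star, spectrum.one_eq] at hμm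
    exact ⟨0, by simpa using hμm⟩
  | of_succ m hm ih =>
    obtain ⟨k, s, hs, rfl⟩ := (h.isTwistedFactorization ⟨m, hm⟩).exists_eq_pow_mul_of_mem_spectrum
      (by simpa using hq) hμ hμm
    obtain ⟨n, rfl⟩ := ih (right_ne_zero_of_mul hμ) hs
    exact ⟨k + n, (pow_add _ _ _).symm⟩

theorem exists_eq_pow_or_eq_mul_pow_of_mem_spectrum_mul_star (h : QSphereRel q z) (hq : ‖q‖ < 1)
    (i : Fin N) (hμ : μ ≠ 0) (hμi : μ ∈ spectrum 𝕜 (z i * star (z i))) :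
    (∃ n : ℕ, μ = q ^ (2 * n)) ∨ ∃ n k : ℕ, μ = (1 - q ^ (2 * k)) * q ^ (2 * n) := by
  simp only [pow_mul]
  obtain hP | ⟨k, s, hs, rfl⟩ :=
    (h.isTwistedFactorization i).mem_spectrum_or_exists_eq_one_sub_pow_mul
      (by simpa using hq) hμ hμi
  · exact .inl (h.exists_eq_pow_of_mem_spectrum_mulStarPartialSum hq i.isLt hμ hP)
  · obtain ⟨n, rfl⟩ := h.exists_eq_pow_of_mem_spectrum_mulStarPartialSum hq i.isLt
      (right_ne_zero_of_mul hμ) hs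
    exact .inr ⟨n, k, rfl⟩

end QSphereRel

theorem VSRel.qSphereRel {A : Type*} [Ring A] [StarRing A] [Algebra ℂ A] {q : ℝ} {z : Fin 4 → A}
    (h : VSRel q z) : QSphereRel (q : ℂ) z :=
  ⟨h.1, h.2.1, h.2.2.1, h.2.2.2⟩

theorem spectrum_z2_qSphere_general {𝕜 A : Type*} [NormedField 𝕜] [NormedRing A] [StarRing A]
    [NormedAlgebra 𝕜 A] [CompleteSpace A] {N : ℕ} {q : 𝕜} (hq : ‖q‖ < 1) {z : Fin N → A}
    (hz : QSphereRel q z) (i : Fin N) :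
    spectrum 𝕜 (star (z i) * z i) ⊆
        ({x : 𝕜 | ∃ n m k : ℕ, 1 ≤ k ∧ x = (1 - q ^ (2 * k)) * q ^ (2 * (n + m))} ∪
          {x : 𝕜 | ∃ n m : ℕ, x = q ^ (2 * (m + n))} ∪ {0}) ∧
    spectrum 𝕜 (z i * star (z i)) ⊆
        ({x : 𝕜 | ∃ n m k : ℕ, x = (1 - q ^ (2 * k)) * q ^ (2 * (n + m))} ∪
          {x : 𝕜 | ∃ n m : ℕ, x = q ^ (2 * (m + n))}) := by
  constructor <;> intro μ hμ <;> obtain rfl | hμ0 := eq_or_ne μ 0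
  · exact .inr rfl
  · have hμ' : μ ∈ spectrum 𝕜 (z i * star (z i)) \ {0} :=
      spectrum.nonzero_mul_comm (𝕜 := 𝕜) (star (z i)) (z i) ▸ ⟨hμ, hμ0⟩
    obtain ⟨n, rfl⟩ | ⟨n, k, rfl⟩ :=
      hz.exists_eq_pow_or_eq_mul_pow_of_mem_spectrum_mul_star hq i hμ0 hμ'.1
    · exact .inl (.inr ⟨0, n, rfl⟩)
    · have hk : k ≠ 0 := by
        rintro rfl
        simp at hμ0
      exact .inl (.inl ⟨n, 0, k, Nat.one_le_iff_ne_zero.mpr hk, rfl⟩)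
  · exact .inl ⟨0, 0, 0, by simp⟩
  · obtain ⟨n, rfl⟩ | ⟨n, k, rfl⟩ :=
      hz.exists_eq_pow_or_eq_mul_pow_of_mem_spectrum_mul_star hq i hμ0 hμ
    · exact .inr ⟨0, n, rfl⟩
    · exact .inl ⟨n, 0, k, rfl⟩

/-- Spectra of `z₂* z₂` and `z₂ z₂*` for the Vaksman–Soibelman quantum 7-sphere. -/
theorem spectrum_z2_qSphere {A : Type*} [NormedRing A] [StarRing A] [CStarRing A]
    [NormedAlgebra ℂ A] [CompleteSpace A]
    (q : ℝ) (hq : q ∈ Set.Ioo (0 : ℝ) 1) (z₁ z₂ z₃ z₄ : A)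
    (hVS : VSRel q ![z₁, z₂, z₃, z₄]) :
    spectrum ℂ (star z₂ * z₂) ⊆
        ({x : ℂ | ∃ n m k : ℕ, 1 ≤ k ∧
            x = (1 - (q : ℂ) ^ (2 * k)) * (q : ℂ) ^ (2 * (n + m))} ∪
          {x : ℂ | ∃ n m : ℕ, x = (q : ℂ) ^ (2 * (m + n))} ∪ {0}) ∧
    spectrum ℂ (z₂ * star z₂) ⊆
        ({x : ℂ | ∃ n m k : ℕ, x = (1 - (q : ℂ) ^ (2 * k)) * (q : ℂ) ^ (2 * (n + m))} ∪
          {x : ℂ | ∃ n m : ℕ, x = (q : ℂ) ^ (2 * (m + n))}) := by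
  exact spectrum_z2_qSphere_general (by simpa [abs_of_pos hq.1] using hq.2) hVS.qSphereRel 1
end

section
/- Let A be a unital C*-algebra, q ∈ (0,1), and z₁, z₂, z₃, z₄ ∈ A elements satisfying the Vaksman–Soibelman S_q^7 relations. Then the spectrum of z₁z₁* is contained in {q^{2(n+m+k)} : n, m, k ≥ 0} ∪ {0}. -/
/-!
Put `x = z₁z₁*`. The commutation relations give `x zⱼ = q² zⱼ x` for `j ≠ 1`, so that
`(q²μ - x) zⱼ = q² zⱼ (μ - x)`. If `μ - x` has an inverse `r`, then `S = ∑ⱼ zⱼ r zⱼ*` satisfies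
`(q²μ - x) S = q² ∑ⱼ zⱼ zⱼ* = q² (1 - x)`, hence `(q²μ - x) (S - q²) = q² (1 - q²μ)` is a nonzero
scalar unless `q²μ = 1`. The spectrum of `x` is therefore stable under division by `q²` away
from `1`, and it is bounded, so every nonzero point of it must reach `1` after finitely many
divisions.
-/

section TwistedCommutation

variable {R A : Type*} [CommRing R] [Ring A] [Algebra R A]

theorem mul_mul_eq_smul_of_mul_eq_smul {a b z : A} {c d : R}
    (ha : a * z = c • (z * a)) (hb : b * z = d • (z * b)) :
    a * b * z = (c * d) • (z * (a * b)) := by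
  rw [mul_assoc, hb, mul_smul_comm, ← mul_assoc, ha, smul_mul_assoc, smul_smul, mul_comm d,
    mul_assoc]

theorem algebraMap_sub_mul_of_mul_eq_smul {x z : A} {p : R} (hz : x * z = p • (z * x)) (μ : R) :
    (algebraMap R A (p * μ) - x) * z = p • (z * (algebraMap R A μ - x)) := by
  rw [sub_mul, hz, mul_sub, smul_sub, ← Algebra.commutes μ z, ← Algebra.smul_def,
    ← Algebra.smul_def, mul_smul]

theorem mul_algebraMap_sub_of_mul_eq_smul {x w : A} {p : R} (hw : w * x = p • (x * w)) (μ : R) :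
    w * (algebraMap R A (p * μ) - x) = p • ((algebraMap R A μ - x) * w) := by
  rw [mul_sub, hw, sub_mul, smul_sub, ← Algebra.commutes (p * μ) w, ← Algebra.smul_def,
    ← Algebra.smul_def, mul_smul]

variable {ι : Type*} {s : Finset ι} {x r : A} {z w : ι → A} {p μ : R}

theorem algebraMap_sub_mul_sum_of_mul_eq_smul (hz : ∀ j ∈ s, x * z j = p • (z j * x))
    (hr : (algebraMap R A μ - x) * r = 1) :
    (algebraMap R A (p * μ) - x) * ∑ j ∈ s, z j * r * w j = p • ∑ j ∈ s, z j * w j := by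
  rw [Finset.mul_sum, Finset.smul_sum]
  refine Finset.sum_congr rfl fun j hj => ?_
  rw [← mul_assoc, ← mul_assoc, algebraMap_sub_mul_of_mul_eq_smul (hz j hj), smul_mul_assoc,
    smul_mul_assoc, mul_assoc (z j), hr, mul_one]

theorem sum_mul_algebraMap_sub_of_mul_eq_smul (hw : ∀ j ∈ s, w j * x = p • (x * w j))
    (hr : r * (algebraMap R A μ - x) = 1) :
    (∑ j ∈ s, z j * r * w j) * (algebraMap R A (p * μ) - x) = p • ∑ j ∈ s, z j * w j := by
  rw [Finset.sum_mul, Finset.smul_sum]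
  refine Finset.sum_congr rfl fun j hj => ?_
  rw [mul_assoc, mul_algebraMap_sub_of_mul_eq_smul (hw j hj), mul_smul_comm, mul_assoc (z j),
    ← mul_assoc r, hr, one_mul]

end TwistedCommutation

theorem isUnit_algebraMap_sub_of_mul_eq_smul_one_sub {𝕜 A : Type*} [Field 𝕜] [Ring A]
    [Algebra 𝕜 A] {x y : A} {p l : 𝕜} (hp : p ≠ 0) (hl : l ≠ 1)
    (hxy : (algebraMap 𝕜 A l - x) * y = p • (1 - x))
    (hyx : y * (algebraMap 𝕜 A l - x) = p • (1 - x)) :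
    IsUnit (algebraMap 𝕜 A l - x) := by
  set t := algebraMap 𝕜 A l - x with ht
  have hcomm : Commute t (y - algebraMap 𝕜 A p) :=
    Commute.sub_right (hxy.trans hyx.symm) (Algebra.commutes p t).symm
  have hprod : t * (y - algebraMap 𝕜 A p) = algebraMap 𝕜 A (p * (1 - l)) := by
    rw [mul_sub, hxy, ← Algebra.commutes, ← Algebra.smul_def, ← smul_sub, ht,
      sub_sub_sub_cancel_right, map_mul, map_sub, map_one, ← Algebra.smul_def]
  have hunit : IsUnit (t * (y - algebraMap 𝕜 A p)) := by
    rw [hprod]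
    exact (mul_ne_zero hp (sub_ne_zero.mpr hl.symm)).isUnit.map (algebraMap 𝕜 A)
  exact (hcomm.isUnit_mul_iff.mp hunit).1

theorem mem_spectrum_of_mul_mem_spectrum {𝕜 A ι : Type*} [Field 𝕜] [Ring A] [Algebra 𝕜 A]
    {s : Finset ι} {x : A} {z w : ι → A} {p μ : 𝕜} (hp : p ≠ 0)
    (hz : ∀ j ∈ s, x * z j = p • (z j * x)) (hw : ∀ j ∈ s, w j * x = p • (x * w j))
    (hsum : x + ∑ j ∈ s, z j * w j = 1) (hmem : p * μ ∈ spectrum 𝕜 x) (hne : p * μ ≠ 1) :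
    μ ∈ spectrum 𝕜 x := by
  by_contra hμ
  obtain ⟨u, hu⟩ := spectrum.notMem_iff.mp hμ
  have hsum' : ∑ j ∈ s, z j * w j = 1 - x := eq_sub_of_add_eq' hsum
  refine spectrum.mem_iff.mp hmem (isUnit_algebraMap_sub_of_mul_eq_smul_one_sub
    (y := ∑ j ∈ s, z j * ↑u⁻¹ * w j) hp hne ?_ ?_)
  · rw [algebraMap_sub_mul_sum_of_mul_eq_smul hz (hu ▸ u.mul_inv), hsum']
  · rw [sum_mul_algebraMap_sub_of_mul_eq_smul hw (hu ▸ u.inv_mul), hsum']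

section NormedField

variable {𝕜 : Type*} [NormedField 𝕜] {p : 𝕜}

theorem subset_insert_zero_range_pow_of_isBounded {S : Set 𝕜} (hS : Bornology.IsBounded S)
    (hp : p ≠ 0) (hp1 : ‖p‖ < 1) (hdiv : ∀ μ, p * μ ∈ S → p * μ ≠ 1 → μ ∈ S) :
    S ⊆ insert 0 (Set.range fun n : ℕ => p ^ n) := by
  intro l hl
  rw [Set.mem_insert_iff, or_iff_not_imp_right]
  intro hpow
  have hquot (n : ℕ) : ∃ μ ∈ S, l = p ^ n * μ := by
    induction n with
    | zero => exact ⟨l, hl, by simp⟩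
    | succ n ih =>
      obtain ⟨μ, hμS, rfl⟩ := ih
      have hμ : p * (p⁻¹ * μ) = μ := mul_inv_cancel_left₀ hp μ
      have hμ1 : μ ≠ 1 := fun h => hpow ⟨n, by simp [h]⟩
      exact ⟨p⁻¹ * μ, hdiv _ (by rwa [hμ]) (by rwa [hμ]), by rw [pow_succ, mul_assoc, hμ]⟩
  obtain ⟨C, hC⟩ := hS.exists_norm_le
  have hbound (n : ℕ) : ‖l‖ ≤ ‖p‖ ^ n * C := by
    obtain ⟨μ, hμS, rfl⟩ := hquot n
    rw [norm_mul, norm_pow]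
    gcongr
    exact hC μ hμS
  have hlim : Filter.Tendsto (fun n : ℕ => ‖p‖ ^ n * C) Filter.atTop (nhds 0) := by
    simpa using (tendsto_pow_atTop_nhds_zero_of_lt_one (norm_nonneg p) hp1).mul_const C
  exact norm_le_zero_iff.mp (ge_of_tendsto' hlim hbound)

theorem spectrum_subset_insert_zero_range_pow {A ι : Type*} [NormedRing A] [NormedAlgebra 𝕜 A]
    [CompleteSpace A] {s : Finset ι} {x : A} {z w : ι → A} (hp : p ≠ 0) (hp1 : ‖p‖ < 1)
    (hz : ∀ j ∈ s, x * z j = p • (z j * x)) (hw : ∀ j ∈ s, w j * x = p • (x * w j))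
    (hsum : x + ∑ j ∈ s, z j * w j = 1) :
    spectrum 𝕜 x ⊆ insert 0 (Set.range fun n : ℕ => p ^ n) :=
  subset_insert_zero_range_pow_of_isBounded (spectrum.isBounded x) hp hp1
    fun _ => mem_spectrum_of_mul_mem_spectrum hp hz hw hsum

end NormedField

section Star

-- Continuity of `star` makes up for the absence of `StarModule ℂ A`: it forces `ℝ`-linearity.
theorem star_ofReal_smul {E : Type*} [NormedAddCommGroup E] [NormedSpace ℂ E] [StarAddMonoid E]
    [ContinuousStar E] (c : ℝ) (a : E) : star ((c : ℂ) • a) = (c : ℂ) • star a := by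
  simpa only [Complex.coe_smul, starAddEquiv_apply] using
    map_real_smul (starAddEquiv : E ≃+ E) continuous_star c a

variable {A : Type*} [NormedRing A] [StarRing A] [ContinuousStar A] [NormedAlgebra ℂ A]

theorem star_mul_eq_smul_of_isSelfAdjoint {x z : A} {c : ℝ} (hx : IsSelfAdjoint x)
    (hz : x * z = (c : ℂ) • (z * x)) : star z * x = (c : ℂ) • (x * star z) := by
  simpa only [star_mul, star_ofReal_smul, hx.star_eq] using congrArg star hz

theorem spectrum_z1_qSphere_general [CompleteSpace A] {ι : Type*} [Fintype ι] {q : ℝ}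
    (hq0 : q ≠ 0) (hq1 : |q| < 1) (z : ι → A) (i : ι)
    (hz : ∀ j ≠ i, z i * z j = (q : ℂ) • (z j * z i))
    (hstar : ∀ j ≠ i, star (z i) * z j = (q : ℂ) • (z j * star (z i)))
    (hsum : ∑ k, z k * star (z k) = 1) :
    spectrum ℂ (z i * star (z i)) ⊆ insert 0 (Set.range fun n : ℕ => (q : ℂ) ^ (2 * n)) := by
  classical
  have hnorm : ‖(q : ℂ) ^ 2‖ < 1 := by
    rw [norm_pow, Complex.norm_real, Real.norm_eq_abs]
    exact pow_lt_one₀ (abs_nonneg q) hq1 two_ne_zero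
  have hcomm (j) (hj : j ∈ Finset.univ.erase i) :
      z i * star (z i) * z j = (q : ℂ) ^ 2 • (z j * (z i * star (z i))) := by
    have hji := Finset.ne_of_mem_erase hj
    rw [mul_mul_eq_smul_of_mul_eq_smul (hz j hji) (hstar j hji), sq]
  have hcomm_star (j) (hj : j ∈ Finset.univ.erase i) :
      star (z j) * (z i * star (z i)) = (q : ℂ) ^ 2 • (z i * star (z i) * star (z j)) := by
    have hcomm_j := hcomm j hj
    rw [← Complex.ofReal_pow] at hcomm_j ⊢
    exact star_mul_eq_smul_of_isSelfAdjoint (.mul_star_self (z i)) hcomm_j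
  rw [← Finset.add_sum_erase _ _ (Finset.mem_univ i)] at hsum
  simp only [pow_mul]
  exact spectrum_subset_insert_zero_range_pow (pow_ne_zero 2 (Complex.ofReal_ne_zero.mpr hq0))
    hnorm hcomm hcomm_star hsum

end Star

/-- Spectrum of `z₁ z₁*` for the Vaksman–Soibelman quantum 7-sphere. -/
theorem spectrum_z1_qSphere {A : Type*} [NormedRing A] [StarRing A] [CStarRing A]
    [NormedAlgebra ℂ A] [CompleteSpace A]
    (q : ℝ) (hq : q ∈ Set.Ioo (0 : ℝ) 1) (z₁ z₂ z₃ z₄ : A)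
    (hVS : VSRel q ![z₁, z₂, z₃, z₄]) :
    spectrum ℂ (z₁ * star z₁) ⊆
        ({x : ℂ | ∃ n m k : ℕ, x = (q : ℂ) ^ (2 * (n + m + k))} ∪ {0}) := by
  obtain ⟨hz, hstar, -, hsum⟩ := hVS
  intro x hx
  obtain rfl | ⟨n, rfl⟩ := spectrum_z1_qSphere_general hq.1.ne'
    ((abs_of_pos hq.1).trans_lt hq.2) ![z₁, z₂, z₃, z₄] 0
    (fun j hj => hz 0 j (Fin.pos_of_ne_zero hj)) (fun j => hstar j 0) hsum hx
  · exact .inr rfl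
  · exact .inl ⟨n, 0, 0, rfl⟩
end

section
/- Let H be a complex Hilbert space, q ∈ (0,1), and Z₁, Z₂, Z₃, Z₄ bounded operators on H satisfying the Vaksman–Soibelman S_q^7 relations. Suppose ξ ∈ H satisfies Z₁Z₁*ξ = ξ and Z_iZ_i*ξ = 0 for i = 2, 3, 4. Let n, m, k, r, t ∈ ℕ with k + m + t = r + n, and set v = Z₁^r (Z₁*)^t Z₂^k Z₃^m Z₄^n ξ. Then Z₁Z₁* v = q^{2(n+m+k)} v, Z₂Z₂* v = (1−q^{2k}) q^{2(m+n)} v, Z₃Z₃* v = q^{2n}(1−q^{2m}) v, and Z₄Z₄* v = (1−q^{2n}) v. -/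
/-!
The partial sums `S_U = ∑ j ∈ U, Z_j Z_j*` over nonempty initial segments `U` behave better than the
individual `Z_j Z_j*`: the commutation relations give `S_U Z_k = Z_k S_U` for `k ∈ U` and
`S_U Z_k = q² Z_k S_U` for `k ∉ U`, and `S_U` commutes with `Z₁*` because it is self-adjoint. Since
`S_U ξ = ξ`, each `S_U` scales a word in the `Z_k` applied to `ξ` by `q²` for every letter outside
`U`. The eigenvalues follow from `Z_i Z_i* = S_{≤ i} - S_{< i}`.
-/

open Finset

theorem semiconjBy_list_map_prod_smul_pow_countP {ι R A : Type*} [CommMonoid R] [Monoid A]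
    [MulAction R A] [SMulCommClass R A A] [IsScalarTower R A A] (p : ι → Prop) [DecidablePred p]
    {s : A} {c : R} {z : ι → A}
    (hz : ∀ i, SemiconjBy s (z i) ((if p i then c else 1) • z i)) (L : List ι) :
    SemiconjBy s (L.map z).prod (c ^ L.countP (p ·) • (L.map z).prod) := by
  induction L with
  | nil => simp
  | cons i L ih =>
    have h := (hz i).mul_right ih
    rw [smul_mul_smul_comm] at h
    by_cases hi : p i <;> simpa [hi, pow_succ'] using h

theorem countP_le_eq_count_add_countP_lt {ι : Type*} [LinearOrder ι] (i : ι) (L : List ι) :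
    L.countP (i ≤ ·) = L.count i + L.countP (i < ·) := by
  induction L with
  | nil => rfl
  | cons j L ih =>
    rcases lt_trichotomy i j with hij | rfl | hij
    · simp [ih, hij, hij.le, hij.ne', add_assoc]
    · simp [ih, add_right_comm]
    · simp [ih, hij.not_ge, hij.not_gt, hij.ne]

/-- The commutation relations of the Vaksman–Soibelman quantum spheres, for a family of elements of
a *-algebra indexed by a linear order with finite initial segments. The sphere equation
`∑ k, z k * star (z k) = 1` is left out. -/
structure VSCommRel {ι R A : Type*} [LinearOrder ι] [LocallyFiniteOrderBot ι] [CommRing R] [Ring A]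
    [StarRing A] [Algebra R A] (q : R) (z : ι → A) : Prop where
  mul_eq_smul_of_lt : ∀ i j, i < j → z i * z j = q • (z j * z i)
  star_mul_eq_smul_of_ne : ∀ i j, i ≠ j → star (z j) * z i = q • (z i * star (z j))
  star_mul_self_eq : ∀ k, star (z k) * z k
    = z k * star (z k) + (1 - q ^ 2) • ∑ j ∈ Iio k, z j * star (z j)

theorem VSRel.vsCommRel {A : Type*} [Ring A] [StarRing A] [Algebra ℂ A] {q : ℝ} {z : Fin 4 → A}
    (h : VSRel q z) : VSCommRel (q : ℂ) z :=
  ⟨h.1, h.2.1, h.2.2.1⟩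

namespace VSCommRel

variable {ι R A : Type*} [LinearOrder ι] [LocallyFiniteOrderBot ι] [CommRing R] [Ring A]
  [StarRing A] [Algebra R A] {q : R} {z : ι → A}

theorem semiconjBy_star (h : VSCommRel q z) {i k : ι} (hik : i ≠ k) :
    SemiconjBy (star (z i)) (z k) (q • z k) := by
  rw [SemiconjBy, smul_mul_assoc, h.star_mul_eq_smul_of_ne k i hik.symm]

theorem semiconjBy_mul_star_of_lt (h : VSCommRel q z) {i k : ι} (hik : i < k) :
    SemiconjBy (z i * star (z i)) (z k) (q ^ 2 • z k) := by
  have hz : SemiconjBy (z i) (z k) (q • z k) := by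
    rw [SemiconjBy, smul_mul_assoc, h.mul_eq_smul_of_lt i k hik]
  simpa only [smul_smul, sq] using (hz.smul_right q).mul_left (h.semiconjBy_star hik.ne)

theorem commute_mul_star_of_gt (h : VSCommRel q z) {i k : ι} (hki : k < i) :
    Commute (z i * star (z i)) (z k) := by
  have hz : SemiconjBy (z i) (q • z k) (z k) := by
    rw [SemiconjBy, mul_smul_comm, h.mul_eq_smul_of_lt k i hki]
  exact hz.mul_left (h.semiconjBy_star hki.ne')

theorem semiconjBy_sum_mul_star (h : VSCommRel q z) {U : Finset ι} {k : ι}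
    (hU : ∀ i ∈ U, i < k) :
    SemiconjBy (∑ i ∈ U, z i * star (z i)) (z k) (q ^ 2 • z k) := by
  rw [SemiconjBy, sum_mul, mul_sum]
  exact sum_congr rfl fun i hi ↦ h.semiconjBy_mul_star_of_lt (hU i hi)

-- The inhomogeneous term in `star_mul_self_eq` makes up for the factor `q ^ 2` on `Iio k`.
theorem commute_sum_Iic_mul_star (h : VSCommRel q z) (k : ι) :
    Commute (∑ i ∈ Iic k, z i * star (z i)) (z k) := by
  set S := ∑ i ∈ Iio k, z i * star (z i)
  have hsum : ∑ i ∈ Iic k, z i * star (z i) = z k * star (z k) + S :=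
    (add_sum_Iio_eq_sum_Iic k).symm
  have hSz : S * z k = q ^ 2 • z k * S := h.semiconjBy_sum_mul_star fun i hi ↦ mem_Iio.mp hi
  calc
    _ = z k * (star (z k) * z k) + S * z k := by rw [hsum, add_mul, mul_assoc]
    _ = z k * (z k * star (z k) + (1 - q ^ 2) • S) + q ^ 2 • (z k * S) := by
      rw [h.star_mul_self_eq, hSz, smul_mul_assoc]
    _ = z k * (z k * star (z k) + S) := by
      rw [mul_add, mul_add, mul_smul_comm, sub_smul, one_smul, add_assoc, sub_add_cancel]
    _ = _ := by rw [hsum]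

theorem commute_sum_mul_star (h : VSCommRel q z) {U : Finset ι} (hU : IsLowerSet (U : Set ι))
    {k : ι} (hk : k ∈ U) : Commute (∑ i ∈ U, z i * star (z i)) (z k) := by
  have hsub : Iic k ⊆ U := fun i hi ↦ hU (mem_Iic.mp hi) hk
  rw [← sum_sdiff hsub]
  refine (Commute.sum_left _ _ _ fun i hi ↦ ?_).add_left (h.commute_sum_Iic_mul_star k)
  exact h.commute_mul_star_of_gt (by simpa using (mem_sdiff.mp hi).2)

theorem commute_sum_mul_star_star (h : VSCommRel q z) {U : Finset ι}
    (hU : IsLowerSet (U : Set ι)) {k : ι} (hk : k ∈ U) :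
    Commute (∑ i ∈ U, z i * star (z i)) (star (z k)) := by
  have hself : IsSelfAdjoint (∑ i ∈ U, z i * star (z i)) :=
    isSelfAdjoint_sum U fun i _ ↦ .mul_star_self (z i)
  simpa only [hself.star_eq] using (h.commute_sum_mul_star hU hk).star_star

theorem semiconjBy_sum_mul_star_list_prod (h : VSCommRel q z) {U : Finset ι}
    (hU : IsLowerSet (U : Set ι)) (L : List ι) :
    SemiconjBy (∑ i ∈ U, z i * star (z i)) (L.map z).prod
      ((q ^ 2) ^ L.countP (· ∉ U) • (L.map z).prod) := by
  refine semiconjBy_list_map_prod_smul_pow_countP (· ∉ U) (fun k ↦ ?_) L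
  by_cases hk : k ∈ U
  · rw [if_neg (not_not.mpr hk), one_smul]
    exact h.commute_sum_mul_star hU hk
  · have hlt : ∀ i ∈ U, i < k := fun i hi ↦ lt_of_not_ge fun hki ↦ hk (hU hki hi)
    simpa [hk] using h.semiconjBy_sum_mul_star hlt

variable {M : Type*} [AddCommGroup M] [Module A M] [Module R M] [IsScalarTower R A M] [OrderBot ι]

theorem sum_mul_star_smul_word (h : VSCommRel q z) {ξ : M}
    (hbot : (z ⊥ * star (z ⊥)) • ξ = ξ) (hξ : ∀ i ≠ ⊥, (z i * star (z i)) • ξ = 0) (r t : ℕ)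
    (L : List ι) {U : Finset ι} (hU : IsLowerSet (U : Set ι)) (hmem : ⊥ ∈ U) :
    (∑ i ∈ U, z i * star (z i)) • (z ⊥ ^ r * star (z ⊥) ^ t * (L.map z).prod) • ξ
      = q ^ (2 * L.countP (· ∉ U)) • (z ⊥ ^ r * star (z ⊥) ^ t * (L.map z).prod) • ξ := by
  set S := ∑ i ∈ U, z i * star (z i) with hS
  have hSξ : S • ξ = ξ := by
    rw [hS, sum_smul, sum_eq_single_of_mem ⊥ hmem fun i _ hi ↦ hξ i hi, hbot]
  have hbotpow : Commute S (z ⊥ ^ r * star (z ⊥) ^ t) :=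
    ((h.commute_sum_mul_star hU hmem).pow_right r).mul_right
      ((h.commute_sum_mul_star_star hU hmem).pow_right t)
  have hword := SemiconjBy.mul_right hbotpow (h.semiconjBy_sum_mul_star_list_prod hU L)
  rw [smul_smul, hword.eq, mul_smul, hSξ, mul_smul_comm, smul_assoc, pow_mul]

end VSCommRel

theorem eigenvector_qSphere_general {ι R A M : Type*} [LinearOrder ι] [LocallyFiniteOrderBot ι]
    [OrderBot ι] [CommRing R] [Ring A] [StarRing A] [Algebra R A] [AddCommGroup M] [Module A M]
    [Module R M] [IsScalarTower R A M] {q : R} {z : ι → A} (h : VSCommRel q z) {ξ : M}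
    (hbot : (z ⊥ * star (z ⊥)) • ξ = ξ) (hξ : ∀ i ≠ ⊥, (z i * star (z i)) • ξ = 0) (r t : ℕ)
    (L : List ι) {v : M} (hv : v = (z ⊥ ^ r * star (z ⊥) ^ t * (L.map z).prod) • ξ) :
    (z ⊥ * star (z ⊥)) • v = q ^ (2 * L.countP (⊥ < ·)) • v ∧
    ∀ i ≠ ⊥, (z i * star (z i)) • v
      = ((1 - q ^ (2 * L.count i)) * q ^ (2 * L.countP (i < ·))) • v := by
  have hIic (i : ι) : (∑ j ∈ Iic i, z j * star (z j)) • v = q ^ (2 * L.countP (i < ·)) • v := by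
    have hU : IsLowerSet (Iic i : Set ι) := by simpa using isLowerSet_Iic i
    simpa [← hv] using h.sum_mul_star_smul_word hbot hξ r t L hU (by simp)
  have hIio (i : ι) (hi : i ≠ ⊥) :
      (∑ j ∈ Iio i, z j * star (z j)) • v = q ^ (2 * L.countP (i ≤ ·)) • v := by
    have hU : IsLowerSet (Iio i : Set ι) := by simpa using isLowerSet_Iio i
    simpa [← hv] using h.sum_mul_star_smul_word hbot hξ r t L hU (by simpa using hi.bot_lt)
  have hIic_bot : Iic (⊥ : ι) = {⊥} := by ext; simp
  refine ⟨by simpa [hIic_bot] using hIic ⊥, fun i hi ↦ ?_⟩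
  have hdiff : z i * star (z i)
      = ∑ j ∈ Iic i, z j * star (z j) - ∑ j ∈ Iio i, z j * star (z j) := by
    rw [← add_sum_Iio_eq_sum_Iic, add_sub_cancel_right]
  rw [hdiff, sub_smul, hIic, hIio i hi, ← sub_smul, countP_le_eq_count_add_countP_lt]
  ring_nf

/-- If `ξ` satisfies `Z₁Z₁*ξ = ξ` and `Z_iZ_i*ξ = 0` for `i = 2,3,4`, then the vector
`v = Z₁^r (Z₁*)^t Z₂^k Z₃^m Z₄^n ξ` (with `k+m+t = r+n`) is a joint eigenvector of the
`Z_i Z_i*` with the indicated eigenvalues. -/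
theorem eigenvector_qSphere {H : Type*} [NormedAddCommGroup H] [InnerProductSpace ℂ H]
    [CompleteSpace H] (q : ℝ) (hq : q ∈ Set.Ioo (0 : ℝ) 1)
    (Z₁ Z₂ Z₃ Z₄ : H →L[ℂ] H) (hVS : VSRel q ![Z₁, Z₂, Z₃, Z₄]) (ξ : H)
    (h1 : (Z₁ * star Z₁) ξ = ξ) (h2 : (Z₂ * star Z₂) ξ = 0)
    (h3 : (Z₃ * star Z₃) ξ = 0) (h4 : (Z₄ * star Z₄) ξ = 0)
    (n m k r t : ℕ) (hrt : k + m + t = r + n) (v : H)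
    (hv : v = (Z₁ ^ r * (star Z₁) ^ t * Z₂ ^ k * Z₃ ^ m * Z₄ ^ n) ξ) :
    (Z₁ * star Z₁) v = ((q : ℂ) ^ (2 * (n + m + k))) • v ∧
    (Z₂ * star Z₂) v = ((1 - (q : ℂ) ^ (2 * k)) * (q : ℂ) ^ (2 * (m + n))) • v ∧
    (Z₃ * star Z₃) v = ((q : ℂ) ^ (2 * n) * (1 - (q : ℂ) ^ (2 * m))) • v ∧
    (Z₄ * star Z₄) v = (1 - (q : ℂ) ^ (2 * n)) • v := by
  have : IsScalarTower ℂ (H →L[ℂ] H) H := ⟨fun _ _ _ ↦ rfl⟩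
  obtain ⟨hZ₁, hZ⟩ := eigenvector_qSphere_general hVS.vsCommRel (ξ := ξ) (v := v) h1
    (by simpa [Fin.forall_fin_succ, bot_eq_zero] using ⟨h2, h3, h4⟩) r t
    (List.replicate k 1 ++ List.replicate m 2 ++ List.replicate n 3)
    (by simpa [bot_eq_zero] using hv)
  refine ⟨?_, ?_, ?_, ?_⟩
  · simpa [bot_eq_zero, List.countP_replicate, add_comm, add_left_comm] using hZ₁
  · simpa [List.countP_replicate, List.count_replicate] using hZ 1 (by decide)
  · simpa [List.countP_replicate, List.count_replicate, mul_comm] using hZ 2 (by decide)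
  · simpa [List.countP_replicate, List.count_replicate] using hZ 3 (by decide)
end

section
/- Let H be a complex Hilbert space, q ∈ (0,1), and Z₁, Z₂, Z₃, Z₄ bounded operators on H satisfying the Vaksman–Soibelman S_q^7 relations. Let n, m, k ∈ ℕ and suppose ξ ∈ H satisfies Z₁Z₁*ξ = q^{2(n+m+k)} ξ, Z₂Z₂*ξ = (1−q^{2k}) q^{2(n+m)} ξ, Z₃Z₃*ξ = q^{2n}(1−q^{2m}) ξ, and Z₄Z₄*ξ = (1−q^{2n}) ξ. Let r, t ∈ ℕ with k + m + t = r + n, and set w = (Z₄*)^n (Z₃*)^m (Z₂*)^k (Z₁*)^r Z₁^t ξ. Then Z₁Z₁* w = w and Z_iZ_i* w = 0 for i = 2, 3, 4. -/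
/-!
Write `Z₁, …, Z₄` for the entries `z 0, …, z 3`. The operator `x = Z₁Z₁*` commutes with `Z₁` and
`Z₁*`, while `Z_j* x = q² x Z_j*` for `j ≠ 1`. Applying the word to `ξ` therefore divides its
`x`-eigenvalue `q^{2(n+m+k)}` by `q^{2(n+m+k)}`, so `xw = w`. By the sphere relation the positive
operators `Z_iZ_i*` with `i ≠ 1` then sum to zero on `w`, hence each of them kills `w`.
-/

/-- The elements `a` and `b` commute up to the scalar `c`: `ab = c ba`. This is the shape of the
quadratic relations of a quantum space; scalars accumulate multiplicatively along words. -/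
def QCommute {R A : Type*} [Mul A] [SMul R A] (c : R) (a b : A) : Prop :=
  a * b = c • (b * a)

namespace QCommute

section Monoid

variable {R A : Type*} [CommMonoid R] [Monoid A] [MulAction R A] [IsScalarTower R A A]
  {c d : R} {a b x : A}

lemma mul_commute_left (ha : QCommute c a x) (hb : Commute b x) : QCommute c (a * b) x := by
  rw [QCommute, mul_assoc, hb.eq, ← mul_assoc, ha, smul_mul_assoc, mul_assoc]

variable [SMulCommClass R A A]

lemma mul_left (ha : QCommute c a x) (hb : QCommute d b x) : QCommute (c * d) (a * b) x :=
  calc a * b * x = d • (a * x * b) := by rw [mul_assoc, hb, mul_smul_comm, mul_assoc]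
    _ = (c * d) • (x * (a * b)) := by rw [ha, smul_mul_assoc, smul_smul, mul_comm d, mul_assoc]

lemma mul_right (ha : QCommute c x a) (hb : QCommute d x b) : QCommute (c * d) x (a * b) :=
  calc x * (a * b) = c • (a * (x * b)) := by rw [← mul_assoc, ha, smul_mul_assoc, mul_assoc]
    _ = (c * d) • (a * b * x) := by rw [hb, mul_smul_comm, smul_smul, mul_assoc]

lemma pow_left (h : QCommute c a x) (p : ℕ) : QCommute (c ^ p) (a ^ p) x := by
  induction p with
  | zero => simp [QCommute]
  | succ p ih => simpa only [pow_succ] using ih.mul_left h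

end Monoid

protected lemma star {R A : Type*} [Star R] [Mul A] [StarMul A] [SMul R A] [StarModule R A] {c : R}
    {a b : A} (h : QCommute c a b) : QCommute (star c) (star b) (star a) := by
  rw [QCommute, ← star_mul, h, star_smul, star_mul]

lemma apply_eq_self_of_apply_eq_smul {K M : Type*} [Field K] [AddCommGroup M] [TopologicalSpace M]
    [Module K M] [ContinuousConstSMul K M] {c : K} {a x : M →L[K] M} (h : QCommute c a x)
    (hc : c ≠ 0) {v : M} (hv : x v = c • v) : x (a v) = a v := by
  refine smul_right_injective M hc ?_
  calc c • x (a v) = a (x v) := (DFunLike.congr_fun h v).symm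
    _ = c • a v := by rw [hv, map_smul]

end QCommute

section SumOfPositive

open ContinuousLinearMap

variable {𝕜 ι E : Type*} {F : ι → Type*} [RCLike 𝕜] [NormedAddCommGroup E] [InnerProductSpace 𝕜 E]
  [CompleteSpace E] [∀ i, NormedAddCommGroup (F i)] [∀ i, InnerProductSpace 𝕜 (F i)]
  [∀ i, CompleteSpace (F i)] {A : ∀ i, E →L[𝕜] F i} {v : E}

lemma apply_eq_zero_of_sum_adjoint_comp_self_apply_eq_zero {s : Finset ι}
    (h : (∑ i ∈ s, adjoint (A i) ∘L A i) v = 0) {i : ι} (hi : i ∈ s) : A i v = 0 := by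
  have sum_norm_sq : ∑ i ∈ s, ‖A i v‖ ^ 2 = 0 :=
    calc ∑ i ∈ s, ‖A i v‖ ^ 2 = RCLike.re (inner 𝕜 ((∑ i ∈ s, adjoint (A i) ∘L A i) v) v) := by
          simp only [apply_norm_sq_eq_inner_adjoint_left, sum_apply, sum_inner, map_sum]
      _ = 0 := by rw [h, inner_zero_left, map_zero]
  have norm_sq := (Finset.sum_eq_zero_iff_of_nonneg fun _ _ ↦ sq_nonneg _).mp sum_norm_sq i hi
  simpa using norm_sq

lemma apply_eq_zero_of_sum_adjoint_comp_self_eq_one [Fintype ι]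
    (hA : ∑ i, adjoint (A i) ∘L A i = 1) {i j : ι} (hj : (adjoint (A j) ∘L A j) v = v)
    (hij : i ≠ j) : A i v = 0 := by
  classical
  have sum_erase : (∑ i ∈ Finset.univ.erase j, adjoint (A i) ∘L A i) v = 0 := by
    rw [Finset.sum_erase_eq_sub (Finset.mem_univ j), hA, sub_apply, hj, one_apply_eq_self, sub_self]
  exact apply_eq_zero_of_sum_adjoint_comp_self_apply_eq_zero sum_erase (by simpa using hij)

end SumOfPositive

namespace VSRel

section StarAlgebra

variable {A : Type*} [Ring A] [StarRing A] [Algebra ℂ A] {q : ℝ} {z : Fin 4 → A}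

lemma isStarNormal_zero (h : VSRel q z) : IsStarNormal (z 0) where
  star_comm_self := by
    have no_lower : Finset.Iio (0 : Fin 4) = ∅ := rfl
    simpa [no_lower, Commute, SemiconjBy] using h.2.2.1 0

lemma commute_zero_mul_star (h : VSRel q z) : Commute (z 0) (z 0 * star (z 0)) :=
  (Commute.refl _).mul_right h.isStarNormal_zero.star_comm_self.symm

lemma commute_star_zero_mul_star (h : VSRel q z) : Commute (star (z 0)) (z 0 * star (z 0)) :=
  h.isStarNormal_zero.star_comm_self.mul_right (Commute.refl _)

lemma qCommute_star_mul_star [StarModule ℂ A] (h : VSRel q z) {i j : Fin 4} (hij : i < j) :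
    QCommute ((q : ℂ) ^ 2) (star (z j)) (z i * star (z i)) := by
  have star_self : QCommute (q : ℂ) (star (z j)) (z i) := h.2.1 i j hij.ne
  have star_star : QCommute (q : ℂ) (star (z j)) (star (z i)) := by
    simpa using QCommute.star (h.1 i j hij)
  simpa only [sq] using star_self.mul_right star_star

lemma qCommute_word_mul_star [StarModule ℂ A] (h : VSRel q z) (n m k r t : ℕ) :
    QCommute ((q : ℂ) ^ (2 * (n + m + k)))
      (star (z 3) ^ n * star (z 2) ^ m * star (z 1) ^ k * star (z 0) ^ r * z 0 ^ t)
      (z 0 * star (z 0)) := by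
  have star_pow (j : Fin 4) (hj : 0 < j) (p : ℕ) :
      QCommute (((q : ℂ) ^ 2) ^ p) (star (z j) ^ p) (z 0 * star (z 0)) :=
    (h.qCommute_star_mul_star hj).pow_left p
  rw [pow_mul, pow_add, pow_add]
  exact ((star_pow 3 (by decide) n).mul_left (star_pow 2 (by decide) m) |>.mul_left
    (star_pow 1 (by decide) k) |>.mul_commute_left (h.commute_star_zero_mul_star.pow_left r)
    |>.mul_commute_left (h.commute_zero_mul_star.pow_left t))

end StarAlgebra

lemma mul_star_apply_eq_zero {H : Type*} [NormedAddCommGroup H] [InnerProductSpace ℂ H]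
    [CompleteSpace H] {q : ℝ} {Z : Fin 4 → H →L[ℂ] H} (h : VSRel q Z) {v : H} {i j : Fin 4}
    (hj : (Z j * star (Z j)) v = v) (hij : i ≠ j) : (Z i * star (Z i)) v = 0 := by
  have sphere : ∑ i, ContinuousLinearMap.adjoint (star (Z i)) ∘L star (Z i) = 1 := by
    simpa only [ContinuousLinearMap.star_eq_adjoint, ContinuousLinearMap.adjoint_adjoint,
      ContinuousLinearMap.mul_def] using h.2.2.2
  have star_apply : star (Z i) v = 0 :=
    apply_eq_zero_of_sum_adjoint_comp_self_eq_one sphere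
      (by simpa [ContinuousLinearMap.star_eq_adjoint] using hj) hij
  rw [mul_apply_eq_comp, star_apply, map_zero]

end VSRel

theorem eigenvector_qSphere_back_general {H : Type*} [NormedAddCommGroup H]
    [InnerProductSpace ℂ H] [CompleteSpace H] {q : ℝ} (hq : q ≠ 0) {Z : Fin 4 → H →L[ℂ] H}
    (hVS : VSRel q Z) (n m k r t : ℕ) {ξ w : H}
    (hξ : (Z 0 * star (Z 0)) ξ = (q : ℂ) ^ (2 * (n + m + k)) • ξ)
    (hw : w = (star (Z 3) ^ n * star (Z 2) ^ m * star (Z 1) ^ k * star (Z 0) ^ r * Z 0 ^ t) ξ) :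
    (Z 0 * star (Z 0)) w = w ∧ ∀ i ≠ 0, (Z i * star (Z i)) w = 0 := by
  have fixed : (Z 0 * star (Z 0)) w = w := by
    have hq' : (q : ℂ) ^ (2 * (n + m + k)) ≠ 0 := pow_ne_zero _ (by exact_mod_cast hq)
    rw [hw]
    exact (hVS.qCommute_word_mul_star n m k r t).apply_eq_self_of_apply_eq_smul hq' hξ
  exact ⟨fixed, fun i hi ↦ hVS.mul_star_apply_eq_zero fixed hi⟩

/-- If `ξ` is a joint eigenvector of the `Z_i Z_i*` with eigenvalues
`q^{2(n+m+k)}, (1-q^{2k})q^{2(n+m)}, q^{2n}(1-q^{2m}), 1-q^{2n}`, then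
`w = (Z₄*)^n (Z₃*)^m (Z₂*)^k (Z₁*)^r Z₁^t ξ` (with `k+m+t = r+n`) satisfies
`Z₁Z₁*w = w` and `Z_iZ_i*w = 0` for `i = 2,3,4`. -/
theorem eigenvector_qSphere_back {H : Type*} [NormedAddCommGroup H] [InnerProductSpace ℂ H]
    [CompleteSpace H] (q : ℝ) (hq : q ∈ Set.Ioo (0 : ℝ) 1)
    (Z₁ Z₂ Z₃ Z₄ : H →L[ℂ] H) (hVS : VSRel q ![Z₁, Z₂, Z₃, Z₄])
    (n m k : ℕ) (ξ : H)
    (h1 : (Z₁ * star Z₁) ξ = ((q : ℂ) ^ (2 * (n + m + k))) • ξ)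
    (h2 : (Z₂ * star Z₂) ξ = ((1 - (q : ℂ) ^ (2 * k)) * (q : ℂ) ^ (2 * (n + m))) • ξ)
    (h3 : (Z₃ * star Z₃) ξ = ((q : ℂ) ^ (2 * n) * (1 - (q : ℂ) ^ (2 * m))) • ξ)
    (h4 : (Z₄ * star Z₄) ξ = (1 - (q : ℂ) ^ (2 * n)) • ξ)
    (r t : ℕ) (hrt : k + m + t = r + n) (w : H)
    (hw : w = ((star Z₄) ^ n * (star Z₃) ^ m * (star Z₂) ^ k * (star Z₁) ^ r * Z₁ ^ t) ξ) :
    (Z₁ * star Z₁) w = w ∧ (Z₂ * star Z₂) w = 0 ∧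
    (Z₃ * star Z₃) w = 0 ∧ (Z₄ * star Z₄) w = 0 := by
  obtain ⟨hw₁, hw₀⟩ := eigenvector_qSphere_back_general hq.1.ne' hVS n m k r t h1 hw
  exact ⟨hw₁, hw₀ 1 (by decide), hw₀ 2 (by decide), hw₀ 3 (by decide)⟩
end

section
/- Let H be a complex Hilbert space, q ∈ (0,1), and Z₁, Z₂, Z₃, Z₄ bounded operators on H satisfying the Vaksman–Soibelman S_q^7 relations. Suppose ξ ∈ H satisfies Z₁Z₁*ξ = ξ and Z_iZ_i*ξ = 0 for i = 2, 3, 4. Let n, m, k, r, t ∈ ℕ with k + m + t = r + n and set v = Z₁^r (Z₁*)^t Z₂^k Z₃^m Z₄^n ξ. Let n₁, n₂, n₃, n₄, m₁, m₂, m₃, m₄ ∈ ℕ satisfy n₂ + n₃ + m₁ + m₄ = n₁ + n₄ + m₂ + m₃. If m₂ + k < n₂, or m₃ + m < n₃, or m₄ + n < n₄, then (Z₄*)^{n₄} (Z₃*)^{n₃} (Z₂*)^{n₂} (Z₁*)^{n₁} Z₁^{m₁} Z₂^{m₂} Z₃^{m₃} Z₄^{m₄} v = 0. -/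
/-!
Fix `j` and filter the space by the kernels of the powers of `Z_j*`. For `i ≠ j` the operator `Z_i`
commutes with `Z_j*` up to a scalar, and so does `Z_i*` for `i < j`, so these operators preserve
every step of the filtration. The difference `Z_j* Z_j - Z_j Z_j*` also commutes with `Z_j*` up to
a scalar, whence `Z_j` raises the step by at most one. The vector `ξ` lies in the first step for
`j = 2, 3, 4`, and counting the factors `Z_j` and `Z_j*` in the monomial gives the claim.
(`Z_j` is `z (j - 1)` for a tuple `z : Fin 4 → A`.)
-/

section PowKer

variable {R A M : Type*} [CommSemiring R] [Semiring A] [Algebra R A] [AddCommMonoid M] [Module A M]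
  {a b s : A} {c : R} {d : ℕ} {x : M}

/-- The kernel of the action of `a ^ d` on the left `A`-module `M`: the step `d` of the filtration
that measures how often `a` must act to kill a vector. It is only an additive submonoid, since `A`
need not be commutative. -/
def powKer (M : Type*) [AddCommMonoid M] [Module A M] (a : A) (d : ℕ) : AddSubmonoid M :=
  AddMonoidHom.mker (DistribSMul.toAddMonoidHom M (a ^ d))

theorem mem_powKer : x ∈ powKer M a d ↔ a ^ d • x = 0 :=
  Iff.rfl

theorem mem_powKer_one : x ∈ powKer M a 1 ↔ a • x = 0 := by
  rw [mem_powKer, pow_one]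

theorem mem_powKer_succ : x ∈ powKer M a (d + 1) ↔ a • x ∈ powKer M a d := by
  rw [mem_powKer, mem_powKer, pow_succ, mul_smul]

theorem powKer_mono : Monotone (powKer M a) := by
  intro d e hde x hx
  rw [mem_powKer] at hx ⊢
  rw [← Nat.sub_add_cancel hde, pow_add, mul_smul, hx, smul_zero]

theorem smul_mem_powKer (hab : a * b = c • (b * a)) (hx : x ∈ powKer M a d) :
    b • x ∈ powKer M a d := by
  have hsemiconj : SemiconjBy b (c • a) a := by rw [SemiconjBy, mul_smul_comm, hab]
  have hpow : a ^ d * b = (c ^ d • b) * a ^ d := by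
    rw [← (hsemiconj.pow_right d).eq, smul_pow, mul_smul_comm, smul_mul_assoc]
  rw [mem_powKer, ← mul_smul, hpow, mul_smul, mem_powKer.1 hx, smul_zero]

theorem pow_smul_mem_powKer (hab : a * b = c • (b * a)) (n : ℕ) (hx : x ∈ powKer M a d) :
    b ^ n • x ∈ powKer M a d := by
  induction n with
  | zero => rwa [pow_zero, one_smul]
  | succ n ih =>
    rw [pow_succ', mul_smul]
    exact smul_mem_powKer hab ih

theorem smul_mem_powKer_succ (hab : a * b = b * a + s) (has : a * s = c • (s * a))
    (hx : x ∈ powKer M a d) : b • x ∈ powKer M a (d + 1) := by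
  induction d generalizing x with
  | zero =>
    have hx0 : x = 0 := by simpa only [mem_powKer, pow_zero, one_smul] using hx
    rw [hx0, smul_zero]
    exact zero_mem _
  | succ d ih =>
    have hax : b • a • x ∈ powKer M a (d + 1) := ih (mem_powKer_succ.1 hx)
    rw [mem_powKer_succ, ← mul_smul, hab, add_smul, mul_smul]
    exact add_mem hax (smul_mem_powKer has hx)

theorem pow_smul_mem_powKer_add (hab : a * b = b * a + s) (has : a * s = c • (s * a)) (n : ℕ)
    (hx : x ∈ powKer M a d) : b ^ n • x ∈ powKer M a (d + n) := by
  induction n with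
  | zero => rwa [pow_zero, one_smul]
  | succ n ih =>
    rw [pow_succ', mul_smul]
    exact smul_mem_powKer_succ hab has ih

end PowKer

theorem star_apply_eq_zero_of_mul_star_apply_eq_zero {𝕜 H : Type*} [RCLike 𝕜]
    [NormedAddCommGroup H] [InnerProductSpace 𝕜 H] [CompleteSpace H] {T : H →L[𝕜] H} {x : H}
    (hx : (T * star T) x = 0) : star T x = 0 := by
  have hker : x ∈ (T ∘L star T).ker := hx
  rwa [ContinuousLinearMap.star_eq_adjoint, T.ker_self_comp_adjoint] at hker

namespace VSRel

variable {A M : Type*} [Ring A] [StarRing A] [Algebra ℂ A] [StarModule ℂ A]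
  [AddCommGroup M] [Module A M] {q : ℝ} {z : Fin 4 → A} {i j : Fin 4} {d : ℕ} {x : M}

theorem star_mul_star (hz : VSRel q z) (hij : i < j) :
    star (z j) * star (z i) = (q : ℂ) • (star (z i) * star (z j)) := by
  have h := congrArg star (hz.1 i j hij)
  rwa [star_mul, star_smul, star_mul, Complex.star_def, Complex.conj_ofReal] at h

theorem star_mul_mul_star (hz : VSRel q z) (hij : i < j) :
    star (z j) * (z i * star (z i)) = (q : ℂ) ^ 2 • (z i * star (z i) * star (z j)) := by
  rw [← mul_assoc, hz.2.1 i j hij.ne, smul_mul_assoc, mul_assoc, hz.star_mul_star hij,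
    mul_smul_comm, smul_smul, ← mul_assoc, sq]

theorem star_mul_sum_mul_star (hz : VSRel q z) (j : Fin 4) :
    star (z j) * ((1 - (q : ℂ) ^ 2) • ∑ i ∈ Finset.Iio j, z i * star (z i)) =
      (q : ℂ) ^ 2 • (((1 - (q : ℂ) ^ 2) • ∑ i ∈ Finset.Iio j, z i * star (z i)) * star (z j)) := by
  rw [mul_smul_comm, smul_mul_assoc, smul_comm ((q : ℂ) ^ 2), Finset.mul_sum, Finset.sum_mul,
    Finset.smul_sum (r := (q : ℂ) ^ 2)]
  congr 1
  exact Finset.sum_congr rfl fun i hi => hz.star_mul_mul_star (Finset.mem_Iio.1 hi)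

theorem star_pow_smul_mem_powKer (hz : VSRel q z) (hij : i < j) (n : ℕ)
    (hx : x ∈ powKer M (star (z j)) d) : star (z i) ^ n • x ∈ powKer M (star (z j)) d :=
  pow_smul_mem_powKer (hz.star_mul_star hij) n hx

theorem pow_smul_mem_powKer_add_ite (hz : VSRel q z) (i : Fin 4) (n : ℕ)
    (hx : x ∈ powKer M (star (z j)) d) :
    z i ^ n • x ∈ powKer M (star (z j)) (d + if i = j then n else 0) := by
  split_ifs with hij
  · subst hij
    exact pow_smul_mem_powKer_add (hz.2.2.1 i) (hz.star_mul_sum_mul_star i) n hx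
  · exact pow_smul_mem_powKer (hz.2.1 i j hij) n hx

theorem monomial_smul_mem_powKer (hz : VSRel q z) (e : Fin 4 → ℕ)
    (hx : x ∈ powKer M (star (z j)) d) :
    (z 0 ^ e 0 * z 1 ^ e 1 * z 2 ^ e 2 * z 3 ^ e 3) • x ∈ powKer M (star (z j)) (d + e j) := by
  have hmem := hz.pow_smul_mem_powKer_add_ite 0 (e 0) <| hz.pow_smul_mem_powKer_add_ite 1 (e 1) <|
    hz.pow_smul_mem_powKer_add_ite 2 (e 2) <| hz.pow_smul_mem_powKer_add_ite 3 (e 3) hx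
  simp only [mul_smul]
  convert hmem using 2
  fin_cases j <;> simp

theorem star_monomial_smul_eq_zero (hz : VSRel q z) (e : Fin 4 → ℕ)
    (hx : x ∈ powKer M (star (z j)) (e j)) :
    (star (z 3) ^ e 3 * star (z 2) ^ e 2 * star (z 1) ^ e 1 * star (z 0) ^ e 0) • x = 0 := by
  simp only [mul_smul]
  match j, hx with
  | 0, hx => rw [mem_powKer.1 hx, smul_zero, smul_zero, smul_zero]
  | 1, hx =>
    have h₀ := hz.star_pow_smul_mem_powKer (i := 0) (by decide) (e 0) hx
    rw [mem_powKer.1 h₀, smul_zero, smul_zero]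
  | 2, hx =>
    have h₀ := hz.star_pow_smul_mem_powKer (i := 0) (by decide) (e 0) hx
    have h₁ := hz.star_pow_smul_mem_powKer (i := 1) (by decide) (e 1) h₀
    rw [mem_powKer.1 h₁, smul_zero]
  | 3, hx =>
    have h₀ := hz.star_pow_smul_mem_powKer (i := 0) (by decide) (e 0) hx
    have h₁ := hz.star_pow_smul_mem_powKer (i := 1) (by decide) (e 1) h₀
    have h₂ := hz.star_pow_smul_mem_powKer (i := 2) (by decide) (e 2) h₁
    exact mem_powKer.1 h₂

end VSRel

theorem monomial_vanishes_qSphere_general {A M : Type*} [Ring A] [StarRing A] [Algebra ℂ A]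
    [StarModule ℂ A] [AddCommGroup M] [Module A M] {q : ℝ} {z : Fin 4 → A} (hz : VSRel q z) {ξ : M}
    (hξ₂ : star (z 1) • ξ = 0) (hξ₃ : star (z 2) • ξ = 0) (hξ₄ : star (z 3) • ξ = 0)
    (n m k r t n₁ n₂ n₃ n₄ m₁ m₂ m₃ m₄ : ℕ) (hlt : m₂ + k < n₂ ∨ m₃ + m < n₃ ∨ m₄ + n < n₄) :
    (star (z 3) ^ n₄ * star (z 2) ^ n₃ * star (z 1) ^ n₂ * star (z 0) ^ n₁ *
        z 0 ^ m₁ * z 1 ^ m₂ * z 2 ^ m₃ * z 3 ^ m₄) •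
      (z 0 ^ r * star (z 0) ^ t * z 1 ^ k * z 2 ^ m * z 3 ^ n) • ξ = 0 := by
  obtain ⟨j, hj, hξ, hdeg⟩ : ∃ j : Fin 4, 0 < j ∧ star (z j) • ξ = 0 ∧
      ![m₁, m₂, m₃, m₄] j + ![0, k, m, n] j < ![n₁, n₂, n₃, n₄] j := by
    rcases hlt with h | h | h
    · exact ⟨1, by decide, hξ₂, h⟩
    · exact ⟨2, by decide, hξ₃, h⟩
    · exact ⟨3, by decide, hξ₄, h⟩
  have hv : (z 0 ^ r * star (z 0) ^ t * z 1 ^ k * z 2 ^ m * z 3 ^ n) • ξ ∈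
      powKer M (star (z j)) (1 + ![0, k, m, n] j) := by
    have h := pow_smul_mem_powKer (hz.2.1 0 j hj.ne) r <| hz.star_pow_smul_mem_powKer hj t <|
      hz.monomial_smul_mem_powKer ![0, k, m, n] (mem_powKer_one.2 hξ)
    simpa [mul_smul] using h
  have hle : 1 + ![0, k, m, n] j + ![m₁, m₂, m₃, m₄] j ≤ ![n₁, n₂, n₃, n₄] j := by omega
  have hw := powKer_mono hle (hz.monomial_smul_mem_powKer ![m₁, m₂, m₃, m₄] hv)
  have hzero := hz.star_monomial_smul_eq_zero ![n₁, n₂, n₃, n₄] hw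
  simp only [mul_smul] at hzero ⊢
  exact hzero

/-- Vanishing of the monomial `(Z₄*)^{n₄}(Z₃*)^{n₃}(Z₂*)^{n₂}(Z₁*)^{n₁}Z₁^{m₁}Z₂^{m₂}Z₃^{m₃}Z₄^{m₄}`
applied to `v = Z₁^r (Z₁*)^t Z₂^k Z₃^m Z₄^n ξ` when `m₂+k < n₂`, `m₃+m < n₃` or `m₄+n < n₄`. -/
theorem monomial_vanishes_qSphere {H : Type*} [NormedAddCommGroup H] [InnerProductSpace ℂ H]
    [CompleteSpace H] (q : ℝ) (hq : q ∈ Set.Ioo (0 : ℝ) 1)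
    (Z₁ Z₂ Z₃ Z₄ : H →L[ℂ] H) (hVS : VSRel q ![Z₁, Z₂, Z₃, Z₄]) (ξ : H)
    (h1 : (Z₁ * star Z₁) ξ = ξ) (h2 : (Z₂ * star Z₂) ξ = 0)
    (h3 : (Z₃ * star Z₃) ξ = 0) (h4 : (Z₄ * star Z₄) ξ = 0)
    (n m k r t : ℕ) (hrt : k + m + t = r + n) (v : H)
    (hv : v = (Z₁ ^ r * (star Z₁) ^ t * Z₂ ^ k * Z₃ ^ m * Z₄ ^ n) ξ)
    (n₁ n₂ n₃ n₄ m₁ m₂ m₃ m₄ : ℕ)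
    (hbal : n₂ + n₃ + m₁ + m₄ = n₁ + n₄ + m₂ + m₃)
    (hlt : m₂ + k < n₂ ∨ m₃ + m < n₃ ∨ m₄ + n < n₄) :
    ((star Z₄) ^ n₄ * (star Z₃) ^ n₃ * (star Z₂) ^ n₂ * (star Z₁) ^ n₁ *
        Z₁ ^ m₁ * Z₂ ^ m₂ * Z₃ ^ m₃ * Z₄ ^ m₄) v = 0 := by
  rw [hv]
  exact monomial_vanishes_qSphere_general hVS (star_apply_eq_zero_of_mul_star_apply_eq_zero h2)
    (star_apply_eq_zero_of_mul_star_apply_eq_zero h3)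
    (star_apply_eq_zero_of_mul_star_apply_eq_zero h4) n m k r t n₁ n₂ n₃ n₄ m₁ m₂ m₃ m₄ hlt
end

section
/- Let A be a unital *-algebra over ℂ, q ∈ (0,1), and z₁, z₂, z₃, z₄ ∈ A elements satisfying the Vaksman–Soibelman S_q^7 relations. Define real coefficients c_{j₁,j₂,j₃,j₄}(N) for multi-indices (j₁,j₂,j₃,j₄) ∈ ℕ⁴ with j₁+j₂+j₃+j₄ = N by c_{0,0,0,0}(0) = 1 and the recursion c_{j₁,j₂,j₃,j₄}(N+1) = q⁴q^{2(j₂+j₃−j₄)} c_{j₁−1,j₂,j₃,j₄}(N) + q²q^{2(j₃−j₄)} c_{j₁,j₂−1,j₃,j₄}(N) + q^{−2j₄} c_{j₁,j₂,j₃−1,j₄}(N) + c_{j₁,j₂,j₃,j₄−1}(N), where any term with a negative index is 0. Then for every N ∈ ℕ, ∑_{j₁+j₂+j₃+j₄=N} c_{j₁,j₂,j₃,j₄}(N) · (z₁^{j₁}(z₂*)^{j₂}(z₃*)^{j₃}z₄^{j₄}) (z₁^{j₁}(z₂*)^{j₂}(z₃*)^{j₃}z₄^{j₄})* = 1. -/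
/-- The recursively defined coefficients `c_{j₁,j₂,j₃,j₄}(N)`: `c_{0,0,0,0}(0) = 1`,
any coefficient with a negative index vanishes, and
`c_{j₁,j₂,j₃,j₄}(N+1) = q⁴q^{2(j₂+j₃-j₄)} c_{j₁-1,j₂,j₃,j₄}(N)
  + q²q^{2(j₃-j₄)} c_{j₁,j₂-1,j₃,j₄}(N) + q^{-2j₄} c_{j₁,j₂,j₃-1,j₄}(N)
  + c_{j₁,j₂,j₃,j₄-1}(N)`. -/
noncomputable def coef (q : ℝ) : ℕ → ℤ → ℤ → ℤ → ℤ → ℝ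
  | 0, j₁, j₂, j₃, j₄ => if j₁ = 0 ∧ j₂ = 0 ∧ j₃ = 0 ∧ j₄ = 0 then 1 else 0
  | N + 1, j₁, j₂, j₃, j₄ =>
      q ^ 4 * q ^ (2 * (j₂ + j₃ - j₄)) * coef q N (j₁ - 1) j₂ j₃ j₄
        + q ^ 2 * q ^ (2 * (j₃ - j₄)) * coef q N j₁ (j₂ - 1) j₃ j₄
        + q ^ (-2 * j₄) * coef q N j₁ j₂ (j₃ - 1) j₄
        + coef q N j₁ j₂ j₃ (j₄ - 1)

/-!
Put `x = (z₁, z₂*, z₃*, z₄)`. The sphere relations say that `∑ tᵢ xᵢ xᵢ* = 1` with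
`t = (q⁴, q², 1, 1)` and that `xₖ xᵢ = rₖ xᵢ xₖ` for `i < k` with `r = (1, q, q, q⁻¹)`, whose first
entry is immaterial. Inserting this resolution of the identity into `m m*`, where `m = x^j` is an
ordered monomial, and moving each `xᵢ` to its place in `m` gives
`m m* = ∑ᵢ wᵢ(j) x^(j+eᵢ) (x^(j+eᵢ))*` with exactly the weights `wᵢ` of the recursion for the
coefficients, so the sum does not depend on `N`.

The involution is not assumed conjugate-linear, so `star (q • zᵢ) = q • star zᵢ` has to be extracted
from the relations. If `q² = 1` it is clear. Otherwise `e = star (q • 1) - q • 1` is central,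
comparing the relation for `z₄* zᵢ` with the adjoint of the one for `zᵢ* z₄` gives `e zᵢ z₄* = 0`,
and the relations for `z₄` then force `e zᵢ = 0` for `i ≠ 4`.
-/

section StarSMulAt

variable {R A : Type*} [CommSemiring R] [Semiring A] [Algebra R A] [StarMul A] {r s : R} {x : A}

/-- The involution commutes with multiplication by the scalar `r` at the element `x`. This local
condition takes the place of a `StarModule` instance with trivially starred scalars. -/
def StarSMulAt (r : R) (x : A) : Prop :=
  star (r • x) = r • star x

namespace StarSMulAt

protected theorem one (x : A) : StarSMulAt (1 : R) x := by
  simp only [StarSMulAt, one_smul]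

protected theorem star (h : StarSMulAt r x) : StarSMulAt r (star x) := by
  rw [StarSMulAt, ← h, star_star, star_star]

theorem mul_left (h : StarSMulAt r x) (y : A) : StarSMulAt r (y * x) := by
  rw [StarSMulAt, ← mul_smul_comm, star_mul, h, star_mul, smul_mul_assoc]

theorem mul_right (h : StarSMulAt r x) (y : A) : StarSMulAt r (x * y) := by
  rw [StarSMulAt, ← smul_mul_assoc, star_mul, h, star_mul, mul_smul_comm]

protected theorem smul (h : StarSMulAt r x) (s : R) : StarSMulAt r (s • x) := by
  simpa only [Algebra.smul_def] using h.mul_left (algebraMap R A s)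

protected theorem mul (hr : StarSMulAt r x) (hs : StarSMulAt s x) : StarSMulAt (r * s) x := by
  rw [StarSMulAt, mul_smul, hr.smul s, hs, mul_smul]

protected theorem pow (h : StarSMulAt r x) (n : ℕ) : StarSMulAt (r ^ n) x := by
  induction n with
  | zero => simpa only [pow_zero] using StarSMulAt.one x
  | succ n ih => simpa only [pow_succ] using ih.mul h

protected theorem prod {ι : Type*} {u : Finset ι} {f : ι → R} (h : ∀ i ∈ u, StarSMulAt (f i) x) :
    StarSMulAt (∏ i ∈ u, f i) x :=
  Finset.prod_induction f (StarSMulAt · x) (fun _ _ ↦ StarSMulAt.mul) (.one x) h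

theorem list_prod {l : List A} (hx : x ∈ l) (h : StarSMulAt r x) : StarSMulAt r l.prod := by
  obtain ⟨l₁, l₂, rfl⟩ := List.append_of_mem hx
  rw [List.prod_append, List.prod_cons]
  exact (h.mul_right _).mul_left _

theorem inv₀ {K : Type*} [Semifield K] [Algebra K A] {r : K} (h : StarSMulAt r x) (hr : r ≠ 0) :
    StarSMulAt r⁻¹ x := by
  rw [StarSMulAt, eq_inv_smul_iff₀ hr, ← h.smul r⁻¹, smul_inv_smul₀ hr]

end StarSMulAt

end StarSMulAt

section Centrality

theorem star_smul_eq_star_algebraMap_mul {R A : Type*} [CommSemiring R] [Semiring A] [Algebra R A]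
    [StarMul A] (r : R) (x : A) : star (r • x) = star (algebraMap R A r) * star x := by
  rw [Algebra.smul_def, Algebra.commutes, star_mul]

variable {K A : Type*} [Field K] [Ring A] [Algebra K A] {q : K}

theorem central_mul_eq_zero {e x w w' : A} (hq : 1 - q ^ 2 ≠ 0) (he : e ∈ Set.center A)
    (hew : e * (x * w') = 0) (hxw : x * w = q • (w * x))
    (hww : w' * w = w * w' + (1 - q ^ 2) • (1 - w * w')) : e * x = 0 := by
  have h_left : e * x * (w' * w) = 0 := by
    rw [← mul_assoc, mul_assoc e, hew, zero_mul]
  have h_right : e * x * (w * w') = 0 := by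
    calc e * x * (w * w') = e * (x * w) * w' := by simp only [mul_assoc]
      _ = q • (e * w * (x * w')) := by
        rw [hxw, mul_smul_comm, smul_mul_assoc]
        simp only [mul_assoc]
      _ = 0 := by rw [(he.comm w).eq, mul_assoc, hew, mul_zero, smul_zero]
  have h_smul : (1 - q ^ 2) • (e * x) = 0 := by
    calc (1 - q ^ 2) • (e * x) = e * x * (w' * w) := by
          rw [hww, mul_add, mul_smul_comm, mul_sub, h_right, mul_one, sub_zero, zero_add]
      _ = 0 := h_left
  exact (smul_eq_zero_iff_right hq).1 h_smul

theorem starSMulAt_of_one_sub_sq_ne_zero [StarMul A] {x w : A} (hq : 1 - q ^ 2 ≠ 0)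
    (hxw : x * w = q • (w * x)) (hwx' : star w * x = q • (x * star w))
    (hxw' : star x * w = q • (w * star x))
    (hww : star w * w = w * star w + (1 - q ^ 2) • (1 - w * star w)) : StarSMulAt q x := by
  have h_center : star (algebraMap K A q) - algebraMap K A q ∈ Set.center A :=
    (Subring.center A).sub_mem (Set.star_mem_center (Set.algebraMap_mem_center q))
      (Set.algebraMap_mem_center q)
  have h_adjoint : star w * x = star (algebraMap K A q) * (x * star w) := by
    simpa only [star_mul, star_star, star_smul_eq_star_algebraMap_mul] using congrArg star hxw'
  have h_zero : (star (algebraMap K A q) - algebraMap K A q) * (x * star w) = 0 := by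
    rw [sub_mul, ← h_adjoint, ← Algebra.smul_def, hwx', sub_self]
  have h_mul : star (algebraMap K A q) * x = q • x := by
    simpa only [sub_mul, sub_eq_zero, ← Algebra.smul_def] using
      central_mul_eq_zero hq h_center h_zero hxw hww
  have h_star : StarSMulAt q (star x) := by
    rw [StarSMulAt, star_smul_eq_star_algebraMap_mul, star_star, h_mul]
  simpa only [star_star] using h_star.star

end Centrality

section OrderedMonomial

/-- The ordered monomial `x₀^{j₀} x₁^{j₁} ⋯ xₙ₋₁^{jₙ₋₁}` in noncommuting elements `x`. -/
def orderedMonomial {A : Type*} [Monoid A] {n : ℕ} (x : Fin n → A) (j : Fin n → ℕ) : A :=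
  (List.ofFn fun i ↦ x i ^ j i).prod

theorem orderedMonomial_succ {A : Type*} [Monoid A] {n : ℕ} (x : Fin (n + 1) → A)
    (j : Fin (n + 1) → ℕ) :
    orderedMonomial x j = x 0 ^ j 0 * orderedMonomial (Fin.tail x) (Fin.tail j) := by
  rw [orderedMonomial, List.ofFn_succ, List.prod_cons]
  rfl

theorem orderedMonomial_zero {A : Type*} [Monoid A] {n : ℕ} (x : Fin n → A) :
    orderedMonomial x 0 = 1 := by
  simp [orderedMonomial]

variable {R A : Type*} [CommSemiring R] [Semiring A] [Algebra R A] {n : ℕ}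

theorem semiconjBy_smul_mul {a b x : A} {r s : R} (ha : SemiconjBy a x (r • x))
    (hb : SemiconjBy b x (s • x)) : SemiconjBy (a * b) x ((r * s) • x) := by
  rw [mul_comm r, mul_smul]
  exact (ha.smul_right s).mul_left hb

theorem semiconjBy_smul_pow {a x : A} {r : R} (h : SemiconjBy a x (r • x)) (k : ℕ) :
    SemiconjBy (a ^ k) x (r ^ k • x) := by
  induction k with
  | zero => simpa only [pow_zero, one_smul] using SemiconjBy.one_left x
  | succ k ih => simpa only [pow_succ] using semiconjBy_smul_mul ih h

theorem semiconjBy_smul_orderedMonomial {x : Fin n → A} {y : A} {r : Fin n → R}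
    (h : ∀ k, SemiconjBy (x k) y (r k • y)) (j : Fin n → ℕ) :
    SemiconjBy (orderedMonomial x j) y ((∏ k, r k ^ j k) • y) := by
  induction n with
  | zero => simp [orderedMonomial]
  | succ n ih =>
    rw [orderedMonomial_succ, Fin.prod_univ_succ]
    exact semiconjBy_smul_mul (semiconjBy_smul_pow (h 0) _) (ih (fun k ↦ h k.succ) _)

theorem orderedMonomial_mul {x : Fin n → A} {r : Fin n → R}
    (hx : ∀ i k, i < k → SemiconjBy (x k) (x i) (r k • x i)) (j : Fin n → ℕ) (i : Fin n) :
    orderedMonomial x j * x i =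
      (∏ k ∈ Finset.Ioi i, r k ^ j k) • orderedMonomial x (j + Pi.single i 1) := by
  induction n with
  | zero => exact i.elim0
  | succ n ih =>
    rw [orderedMonomial_succ, orderedMonomial_succ, mul_assoc]
    cases i using Fin.cases with
    | zero =>
      have h_tail : Fin.tail (j + Pi.single 0 1) = Fin.tail j := by
        ext k
        simp [Fin.tail]
      have h_comm : SemiconjBy (orderedMonomial (Fin.tail x) (Fin.tail j)) (x 0)
          ((∏ k : Fin n, r k.succ ^ j k.succ) • x 0) :=
        semiconjBy_smul_orderedMonomial (fun k ↦ hx 0 k.succ k.succ_pos) _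
      rw [h_tail, h_comm.eq, Fin.prod_Ioi_zero, Pi.add_apply, Pi.single_eq_same, pow_succ,
        smul_mul_assoc, mul_smul_comm, mul_assoc]
    | succ i =>
      have h_tail : Fin.tail (j + Pi.single i.succ 1) = Fin.tail j + Pi.single i 1 := by
        ext k
        simp [Fin.tail, Pi.single_apply]
      have h_ih := ih (x := Fin.tail x) (r := Fin.tail r)
        (fun a b hab ↦ hx a.succ b.succ (Fin.succ_lt_succ_iff.2 hab)) (Fin.tail j) i
      rw [h_tail, Fin.prod_Ioi_succ, Pi.add_apply, Pi.single_eq_of_ne (Fin.succ_ne_zero i).symm,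
        add_zero, ← mul_smul_comm]
      exact congrArg (x 0 ^ j 0 * ·) h_ih

theorem StarSMulAt.orderedMonomial [StarMul A] {x : Fin n → A} {r : R} {i : Fin n}
    (h : StarSMulAt r (x i)) {j : Fin n → ℕ} (hj : j i ≠ 0) :
    StarSMulAt r (orderedMonomial x j) := by
  have h_pow : StarSMulAt r (x i ^ j i) := by
    rw [← pow_sub_one_mul hj]
    exact h.mul_left _
  exact h_pow.list_prod (List.mem_ofFn.2 ⟨i, rfl⟩)

/-- The weight of `m m*`, for `m` the ordered monomial of exponent `j + eᵢ`, in the expansion of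
`x^j (x^j)*`: here `t` are the weights of the resolution of the identity `∑ tᵢ xᵢ xᵢ* = 1`, and `r`
are the scalars of the commutation relations `xₖ xᵢ = rₖ xᵢ xₖ` for `i < k`. -/
def insertionWeight (t r : Fin n → R) (j : Fin n → ℕ) (i : Fin n) : R :=
  t i * (∏ k ∈ Finset.Ioi i, r k ^ j k) ^ 2

theorem insertionWeight_add_single (t r : Fin n → R) (j : Fin n → ℕ) (i : Fin n) :
    insertionWeight t r (j + Pi.single i 1) i = insertionWeight t r j i := by
  have h_exponent : ∀ k ∈ Finset.Ioi i, (j + Pi.single i 1 : Fin n → ℕ) k = j k := fun k hk ↦ by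
    rw [Pi.add_apply, Pi.single_eq_of_ne (Finset.mem_Ioi.1 hk).ne', add_zero]
  rw [insertionWeight, insertionWeight,
    Finset.prod_congr rfl fun k hk ↦ by rw [h_exponent k hk]]

theorem orderedMonomial_mul_star [StarMul A] {x : Fin n → A} {t r : Fin n → R}
    (hx : ∀ i k, i < k → SemiconjBy (x k) (x i) (r k • x i))
    (hstar : ∀ i k, i < k → StarSMulAt (r k) (x i))
    (hone : ∑ i, t i • (x i * star (x i)) = 1) (j : Fin n → ℕ) :
    orderedMonomial x j * star (orderedMonomial x j) =
      ∑ i, insertionWeight t r j i •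
        (orderedMonomial x (j + Pi.single i 1) * star (orderedMonomial x (j + Pi.single i 1))) := by
  set m := orderedMonomial x j
  have h_insert (i : Fin n) : m * x i * star (m * x i) = (∏ k ∈ Finset.Ioi i, r k ^ j k) ^ 2 •
      (orderedMonomial x (j + Pi.single i 1) * star (orderedMonomial x (j + Pi.single i 1))) := by
    have h_scalar : StarSMulAt (∏ k ∈ Finset.Ioi i, r k ^ j k)
        (orderedMonomial x (j + Pi.single i 1)) :=
      StarSMulAt.prod fun k hk ↦
        ((hstar i k (Finset.mem_Ioi.1 hk)).orderedMonomial (by simp)).pow _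
    rw [orderedMonomial_mul hx, h_scalar, smul_mul_smul_comm, sq]
  calc m * star m = m * (∑ i, t i • (x i * star (x i))) * star m := by rw [hone, mul_one]
    _ = ∑ i, t i • (m * x i * star (m * x i)) := by
      simp only [Finset.mul_sum, Finset.sum_mul, mul_smul_comm, smul_mul_assoc, star_mul, mul_assoc]
    _ = _ := by simp only [h_insert, insertionWeight, mul_smul]

end OrderedMonomial

section ConservedSum

theorem sum_antidiagonalTuple_succ_filter_ne_zero {M : Type*} [AddCommMonoid M] {n : ℕ} (N : ℕ)
    (i : Fin n) (f : (Fin n → ℕ) → M) :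
    ∑ j ∈ Finset.Nat.antidiagonalTuple n (N + 1) with j i ≠ 0, f j =
      ∑ j ∈ Finset.Nat.antidiagonalTuple n N, f (j + Pi.single i 1) := by
  have h_cancel {j : Fin n → ℕ} (hj : j i ≠ 0) : j - Pi.single i 1 + Pi.single i 1 = j :=
    tsub_add_cancel_of_le (update_le_iff.2 ⟨Nat.one_le_iff_ne_zero.2 hj, fun _ _ ↦ Nat.zero_le _⟩)
  have h_sum (j : Fin n → ℕ) : ∑ k, (j + Pi.single i 1 : Fin n → ℕ) k = ∑ k, j k + 1 := by
    simp [Finset.sum_add_distrib]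
  refine Finset.sum_nbij' (· - Pi.single i 1) (· + Pi.single i 1) ?_ ?_ ?_ ?_ ?_
  · intro j hj
    rw [Finset.mem_filter, Finset.Nat.mem_antidiagonalTuple] at hj
    rw [Finset.Nat.mem_antidiagonalTuple, ← add_left_inj 1, ← h_sum,
      h_cancel hj.2, hj.1]
  · intro j hj
    rw [Finset.Nat.mem_antidiagonalTuple] at hj
    rw [Finset.mem_filter, Finset.Nat.mem_antidiagonalTuple, h_sum, hj]
    simp
  · exact fun j hj ↦ h_cancel (Finset.mem_filter.1 hj).2
  · exact fun j _ ↦ add_tsub_cancel_right j _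
  · exact fun j hj ↦ by rw [h_cancel (Finset.mem_filter.1 hj).2]

variable {R M : Type*} [CommSemiring R] [AddCommMonoid M] [Module R M] {n : ℕ}

theorem sum_antidiagonalTuple_smul_eq {c : ℕ → (Fin n → ℕ) → R} {w : (Fin n → ℕ) → Fin n → R}
    {F : (Fin n → ℕ) → M}
    (hc : ∀ N j, c (N + 1) j = ∑ i with j i ≠ 0, w j i * c N (j - Pi.single i 1))
    (hF : ∀ j, F j = ∑ i, w (j + Pi.single i 1) i • F (j + Pi.single i 1)) (N : ℕ) :
    ∑ j ∈ Finset.Nat.antidiagonalTuple n N, c N j • F j = c 0 0 • F 0 := by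
  induction N with
  | zero => rw [Finset.Nat.antidiagonalTuple_zero_right, Finset.sum_singleton]
  | succ N ih =>
    calc ∑ j ∈ Finset.Nat.antidiagonalTuple n (N + 1), c (N + 1) j • F j
        = ∑ i, ∑ j ∈ Finset.Nat.antidiagonalTuple n (N + 1) with j i ≠ 0,
            (w j i * c N (j - Pi.single i 1)) • F j := by
          simp only [hc, Finset.sum_smul, Finset.sum_filter, ite_smul, zero_smul]
          rw [Finset.sum_comm]
      _ = ∑ j ∈ Finset.Nat.antidiagonalTuple n N,
            ∑ i, (w (j + Pi.single i 1) i * c N j) • F (j + Pi.single i 1) := by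
          simp only [sum_antidiagonalTuple_succ_filter_ne_zero, add_tsub_cancel_right]
          rw [Finset.sum_comm]
      _ = ∑ j ∈ Finset.Nat.antidiagonalTuple n N, c N j • F j := by
          refine Finset.sum_congr rfl fun j _ ↦ ?_
          rw [hF j, Finset.smul_sum]
          exact Finset.sum_congr rfl fun i _ ↦ by rw [mul_comm, mul_smul]
      _ = c 0 0 • F 0 := ih

theorem sum_smul_orderedMonomial_mul_star {A : Type*} [Semiring A] [Algebra R A] [StarMul A]
    {x : Fin n → A} {t r : Fin n → R} {c : ℕ → (Fin n → ℕ) → R}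
    (hx : ∀ i k, i < k → SemiconjBy (x k) (x i) (r k • x i))
    (hstar : ∀ i k, i < k → StarSMulAt (r k) (x i))
    (hone : ∑ i, t i • (x i * star (x i)) = 1)
    (hc : ∀ N j, c (N + 1) j =
      ∑ i with j i ≠ 0, insertionWeight t r j i * c N (j - Pi.single i 1)) (N : ℕ) :
    ∑ j ∈ Finset.Nat.antidiagonalTuple n N,
      c N j • (orderedMonomial x j * star (orderedMonomial x j)) = c 0 0 • (1 : A) := by
  have h_sum := sum_antidiagonalTuple_smul_eq hc
    (F := fun j ↦ orderedMonomial x j * star (orderedMonomial x j))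
    (fun j ↦ by
      simpa only [insertionWeight_add_single] using orderedMonomial_mul_star hx hstar hone j) N
  rwa [orderedMonomial_zero, star_one, mul_one] at h_sum

end ConservedSum

section Coef

theorem coef_eq_zero_of_neg (q : ℝ) (N : ℕ) {a b c d : ℤ} (h : a < 0 ∨ b < 0 ∨ c < 0 ∨ d < 0) :
    coef q N a b c d = 0 := by
  induction N generalizing a b c d with
  | zero =>
    rw [coef, if_neg]
    omega
  | succ N ih =>
    rw [coef, ih (a := a - 1) (by omega), ih (b := b - 1) (by omega),
      ih (c := c - 1) (by omega), ih (d := d - 1) (by omega)]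
    simp only [mul_zero, add_zero]

/-- The coefficients `coef` as a family indexed by multi-indices of natural numbers. -/
noncomputable def multiCoef (q : ℝ) (N : ℕ) (j : Fin 4 → ℕ) : ℝ :=
  coef q N (j 0) (j 1) (j 2) (j 3)

theorem insertionWeight_sphere {q : ℝ} (hq : q ≠ 0) (j : Fin 4 → ℕ) :
    insertionWeight ![q ^ 4, q ^ 2, 1, 1] ![1, q, q, q⁻¹] j =
      ![q ^ 4 * q ^ (2 * ((j 1 : ℤ) + j 2 - j 3)), q ^ 2 * q ^ (2 * ((j 2 : ℤ) - j 3)),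
        q ^ (-2 * (j 3 : ℤ)), 1] := by
  have h_Ioi_zero : Finset.Ioi (0 : Fin 4) = {1, 2, 3} := by decide
  have h_Ioi_one : Finset.Ioi (1 : Fin 4) = {2, 3} := by decide
  have h_Ioi_two : Finset.Ioi (2 : Fin 4) = {3} := by decide
  have h_Ioi_three : Finset.Ioi (3 : Fin 4) = ∅ := by decide
  ext i
  fin_cases i <;>
    simp [insertionWeight, h_Ioi_zero, h_Ioi_one, h_Ioi_two, h_Ioi_three, zpow_mul', zpow_add₀ hq,
      zpow_sub₀ hq, div_eq_mul_inv, mul_assoc]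

theorem multiCoef_succ {q : ℝ} (hq : q ≠ 0) (N : ℕ) (j : Fin 4 → ℕ) :
    multiCoef q (N + 1) j =
      ∑ i with j i ≠ 0, insertionWeight ![q ^ 4, q ^ 2, 1, 1] ![1, q, q, q⁻¹] j i *
        multiCoef q N (j - Pi.single i 1) := by
  have h_term (a : ℝ) (i : Fin 4) : (if j i ≠ 0 then a * multiCoef q N (j - Pi.single i 1) else 0) =
      a * coef q N (j 0 - (Pi.single i 1 : Fin 4 → ℤ) 0) (j 1 - (Pi.single i 1 : Fin 4 → ℤ) 1)
        (j 2 - (Pi.single i 1 : Fin 4 → ℤ) 2) (j 3 - (Pi.single i 1 : Fin 4 → ℤ) 3) := by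
    split_ifs with hi
    · have h_cast (k : Fin 4) :
          ((j - Pi.single i 1 : Fin 4 → ℕ) k : ℤ) = j k - (Pi.single i 1 : Fin 4 → ℤ) k := by
        obtain rfl | hk := eq_or_ne k i
        · simp [Nat.cast_sub (Nat.one_le_iff_ne_zero.2 hi)]
        · simp [hk]
      simp only [multiCoef, h_cast]
    · rw [coef_eq_zero_of_neg, mul_zero]
      fin_cases i <;> simp_all
  rw [Finset.sum_filter, insertionWeight_sphere hq, multiCoef, coef]
  simp only [h_term, Fin.sum_univ_four]
  simp

end Coef

namespace VSRel

variable {A : Type*} [Ring A] [StarRing A] [Algebra ℂ A] {q : ℝ} {z : Fin 4 → A}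

theorem mul_eq_smul (h : VSRel q z) {i j : Fin 4} (hij : i < j) :
    z i * z j = q • (z j * z i) := by
  simpa only [Complex.coe_smul] using h.1 i j hij

theorem star_mul_eq_smul (h : VSRel q z) {i j : Fin 4} (hij : i ≠ j) :
    star (z j) * z i = q • (z i * star (z j)) := by
  simpa only [Complex.coe_smul] using h.2.1 i j hij

theorem star_mul_self (h : VSRel q z) (k : Fin 4) :
    star (z k) * z k =
      z k * star (z k) + (1 - q ^ 2) • ∑ j ∈ Finset.Iio k, z j * star (z j) := by
  rw [h.2.2.1 k, ← Complex.coe_smul]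
  push_cast
  rfl

theorem sum_mul_star (h : VSRel q z) : ∑ k, z k * star (z k) = 1 :=
  h.2.2.2

theorem star_mul_self_last (h : VSRel q z) :
    star (z 3) * z 3 = z 3 * star (z 3) + (1 - q ^ 2) • (1 - z 3 * star (z 3)) := by
  rw [h.star_mul_self, ← h.sum_mul_star, Fin.sum_univ_four,
    show Finset.Iio (3 : Fin 4) = {0, 1, 2} by decide, Finset.sum_insert (by decide),
    Finset.sum_pair (by decide)]
  module

theorem starSMulAt (h : VSRel q z) {i : Fin 4} (hi : i < 3) : StarSMulAt q (z i) := by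
  by_cases hq : 1 - q ^ 2 = 0
  · obtain rfl | rfl := sq_eq_one_iff.1 (sub_eq_zero.1 hq).symm
    · exact .one _
    · simp [StarSMulAt]
  · exact starSMulAt_of_one_sub_sq_ne_zero hq (h.mul_eq_smul hi) (h.star_mul_eq_smul hi.ne)
      (h.star_mul_eq_smul hi.ne') h.star_mul_self_last

/-- The tuple `(z₁, z₂*, z₃*, z₄)` whose ordered monomials occur in the theorem. -/
def mixedTuple (z : Fin 4 → A) : Fin 4 → A :=
  ![z 0, star (z 1), star (z 2), z 3]

theorem sum_smul_mixedTuple_mul_star (h : VSRel q z) :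
    ∑ i, (![q ^ 4, q ^ 2, 1, 1] : Fin 4 → ℝ) i • (mixedTuple z i * star (mixedTuple z i)) = 1 := by
  have h_one : star (z 1) * z 1 = z 1 * star (z 1) + (1 - q ^ 2) • (z 0 * star (z 0)) := by
    rw [h.star_mul_self, show Finset.Iio (1 : Fin 4) = {0} by decide, Finset.sum_singleton]
  have h_two : star (z 2) * z 2 =
      z 2 * star (z 2) + (1 - q ^ 2) • (z 0 * star (z 0) + z 1 * star (z 1)) := by
    rw [h.star_mul_self, show Finset.Iio (2 : Fin 4) = {0, 1} by decide,
      Finset.sum_pair (by decide)]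
  rw [← h.sum_mul_star]
  simp only [Fin.sum_univ_four, mixedTuple, Matrix.cons_val, star_star, h_one, h_two]
  module

theorem semiconjBy_mixedTuple (h : VSRel q z) (hq : q ≠ 0) (i k : Fin 4) (hik : i < k) :
    SemiconjBy (mixedTuple z k) (mixedTuple z i)
      ((![1, q, q, q⁻¹] : Fin 4 → ℝ) k • mixedTuple z i) := by
  have h_flip {a b : A} (hab : a * b = q • (b * a)) : b * a = q⁻¹ • (a * b) := by
    rw [hab, inv_smul_smul₀ hq]
  have h_star : star (z 2) * star (z 1) = q • (star (z 1) * star (z 2)) := by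
    rw [← star_mul, h.mul_eq_smul (by decide : (1 : Fin 4) < 2),
      (h.starSMulAt (by decide : (1 : Fin 4) < 3)).mul_left, star_mul]
  rw [SemiconjBy, smul_mul_assoc]
  fin_cases i <;> fin_cases k <;> try exact absurd hik (by decide)
  · exact h.star_mul_eq_smul (by decide)
  · exact h.star_mul_eq_smul (by decide)
  · exact h_flip (h.mul_eq_smul (by decide))
  · exact h_star
  · exact h_flip (h.star_mul_eq_smul (by decide))
  · exact h_flip (h.star_mul_eq_smul (by decide))

theorem starSMulAt_mixedTuple (h : VSRel q z) (hq : q ≠ 0) (i k : Fin 4) (hik : i < k) :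
    StarSMulAt ((![1, q, q, q⁻¹] : Fin 4 → ℝ) k) (mixedTuple z i) := by
  have h_base : StarSMulAt q (mixedTuple z i) := by
    have hi : i < 3 := hik.trans_le (Fin.le_last k)
    fin_cases i
    · exact h.starSMulAt hi
    · exact (h.starSMulAt hi).star
    · exact (h.starSMulAt hi).star
    · exact absurd hi (by decide)
  fin_cases k
  · exact .one _
  · exact h_base
  · exact h_base
  · exact h_base.inv₀ hq

end VSRel

theorem coef_sum_eq_one_general {A : Type*} [Ring A] [Algebra ℂ A] [StarRing A]
    {q : ℝ} (hq : q ≠ 0) {z₁ z₂ z₃ z₄ : A} (hVS : VSRel q ![z₁, z₂, z₃, z₄]) (N : ℕ) :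
    ∑ j ∈ Finset.Nat.antidiagonalTuple 4 N,
      ((coef q N (j 0) (j 1) (j 2) (j 3) : ℝ) : ℂ) •
        ((z₁ ^ (j 0) * (star z₂) ^ (j 1) * (star z₃) ^ (j 2) * z₄ ^ (j 3)) *
          star (z₁ ^ (j 0) * (star z₂) ^ (j 1) * (star z₃) ^ (j 2) * z₄ ^ (j 3))) = 1 := by
  have h_monomial (j : Fin 4 → ℕ) :
      orderedMonomial (VSRel.mixedTuple ![z₁, z₂, z₃, z₄]) j =
        z₁ ^ j 0 * star z₂ ^ j 1 * star z₃ ^ j 2 * z₄ ^ j 3 := by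
    simp [orderedMonomial, VSRel.mixedTuple, mul_assoc]
  have h_coef_zero : multiCoef q 0 0 = 1 := by simp [multiCoef, coef]
  have h_sum := sum_smul_orderedMonomial_mul_star (hVS.semiconjBy_mixedTuple hq)
    (hVS.starSMulAt_mixedTuple hq) hVS.sum_smul_mixedTuple_mul_star (multiCoef_succ hq) N
  rw [h_coef_zero, one_smul] at h_sum
  simpa only [h_monomial, multiCoef, Complex.coe_smul] using h_sum

/-- For each `N`, the weighted sum of the monomials
`z₁^{j₁}(z₂*)^{j₂}(z₃*)^{j₃}z₄^{j₄}` times their adjoints, with weights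
`c_{j₁,j₂,j₃,j₄}(N)` over all multi-indices with `j₁+j₂+j₃+j₄ = N`, equals `1`. -/
theorem coef_sum_eq_one {A : Type*} [Ring A] [Algebra ℂ A] [StarRing A]
    (q : ℝ) (hq : q ∈ Set.Ioo (0 : ℝ) 1) (z₁ z₂ z₃ z₄ : A)
    (hVS : VSRel q ![z₁, z₂, z₃, z₄]) (N : ℕ) :
    ∑ j ∈ Finset.Nat.antidiagonalTuple 4 N,
      ((coef q N (j 0) (j 1) (j 2) (j 3) : ℝ) : ℂ) •
        ((z₁ ^ (j 0) * (star z₂) ^ (j 1) * (star z₃) ^ (j 2) * z₄ ^ (j 3)) *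
          star (z₁ ^ (j 0) * (star z₂) ^ (j 1) * (star z₃) ^ (j 2) * z₄ ^ (j 3))) = 1 :=
  coef_sum_eq_one_general hq.1.ne' hVS N
end
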